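/- arXiv:2109.05768 — 9 statements merged into one kernel-verified Lean document; each statement's English description precedes it below -/
import Mathlib

section
/- An inner product ⟨·,·⟩ on Sym(n) is O(n)-invariant (i.e. ⟨RXRᵀ, RYRᵀ⟩ = ⟨X,Y⟩ for all R ∈ O(n) and X,Y ∈ Sym(n)) if and only if there exist real numbers α, β with α > 0 and α + nβ > 0 such that ⟨X,X⟩ = α·tr(X²) + β·tr(X)² for all X ∈ Sym(n). -/
open Matrix Finset

lemma aux_perm {n : ℕ} (σ : Equiv.Perm (Fin n)) (d : Fin n → ℝ) :
    ((1 : Matrix (Fin n) (Fin n) ℝ).submatrix σ id) * diagonal d *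
      ((1 : Matrix (Fin n) (Fin n) ℝ).submatrix σ id)ᵀ = diagonal (d ∘ σ) := by
  ext i j
  simp [Matrix.mul_apply, Matrix.diagonal_apply, Matrix.one_apply]
  split_ifs with h
  · rw [h]
  · rfl

lemma aux_perm_orth {n : ℕ} (σ : Equiv.Perm (Fin n)) :
    ((1 : Matrix (Fin n) (Fin n) ℝ).submatrix σ id) *
      ((1 : Matrix (Fin n) (Fin n) ℝ).submatrix σ id)ᵀ = 1 := by
  have := aux_perm σ (fun _ => 1)
  have h1 : diagonal (fun _ : Fin n => (1:ℝ)) = 1 := Matrix.diagonal_one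
  rw [h1, Matrix.mul_one] at this
  rw [this]
  exact h1

lemma aux_spectral {n : ℕ} (X : Matrix (Fin n) (Fin n) ℝ) (hX : X.IsSymm) :
    ∃ (R : Matrix (Fin n) (Fin n) ℝ) (d : Fin n → ℝ), R * Rᵀ = 1 ∧ X = R * diagonal d * Rᵀ := by
  have hH : X.IsHermitian := by
    rw [Matrix.IsHermitian, Matrix.conjTranspose_eq_transpose_of_trivial]; exact hX
  refine ⟨hH.eigenvectorUnitary, hH.eigenvalues, ?_, ?_⟩
  · have := Unitary.coe_mul_star_self hH.eigenvectorUnitary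
    rwa [Unitary.coe_star, Matrix.star_eq_conjTranspose, Matrix.conjTranspose_eq_transpose_of_trivial] at this
  · have := hH.spectral_theorem
    rw [Unitary.conjStarAlgAut_apply, Matrix.star_eq_conjTranspose,
      Matrix.conjTranspose_eq_transpose_of_trivial] at this
    exact this

lemma aux_exists_perm {n : ℕ} (p q i j : Fin n) (hpq : p ≠ q) (hij : i ≠ j) :
    ∃ σ : Equiv.Perm (Fin n), σ p = i ∧ σ q = j := by
  refine ⟨(Equiv.swap p i).trans (Equiv.swap (Equiv.swap p i q) j), ?_, ?_⟩
  · simp only [Equiv.trans_apply, Equiv.swap_apply_left]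
    apply Equiv.swap_apply_of_ne_of_ne _ hij
    intro h
    have : Equiv.swap p i p = Equiv.swap p i q := by rw [← h, Equiv.swap_apply_left]
    exact hpq ((Equiv.swap p i).injective this)
  · simp

lemma aux_trace {n : ℕ} (R : Matrix (Fin n) (Fin n) ℝ) (hR : R * Rᵀ = 1)
    (X : Matrix (Fin n) (Fin n) ℝ) :
    (R * X * Rᵀ).trace = X.trace ∧ ((R * X * Rᵀ) * (R * X * Rᵀ)).trace = (X * X).trace := by
  have hR' : Rᵀ * R = 1 := mul_eq_one_comm.mp hR
  have key : ∀ Y : Matrix (Fin n) (Fin n) ℝ, (R * Y * Rᵀ).trace = Y.trace := by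
    intro Y
    rw [Matrix.trace_mul_comm, ← Matrix.mul_assoc, hR', Matrix.one_mul]
  refine ⟨key X, ?_⟩
  rw [← key (X * X)]
  congr 1
  calc R * X * Rᵀ * (R * X * Rᵀ) = R * X * (Rᵀ * R) * X * Rᵀ := by simp only [Matrix.mul_assoc]
    _ = _ := by rw [hR']; simp only [Matrix.mul_assoc, Matrix.one_mul]

lemma aux_conj_symm {n : ℕ} (R X : Matrix (Fin n) (Fin n) ℝ) (hX : X.IsSymm) :
    (R * X * Rᵀ).IsSymm := by
  unfold Matrix.IsSymm at *
  simp [Matrix.transpose_mul, hX, Matrix.mul_assoc]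

/-- An inner product on `Sym(n)` is `O(n)`-invariant iff it is of the form
`⟨X,X⟩ = α·tr(X²) + β·tr(X)²` with `α > 0` and `α + nβ > 0`. -/
theorem o_n_invariant_inner_products_characterization (n : ℕ)
    (ip : Matrix (Fin n) (Fin n) ℝ → Matrix (Fin n) (Fin n) ℝ → ℝ)
    (h_symm : ∀ X Y, X.IsSymm → Y.IsSymm → ip X Y = ip Y X)
    (h_add : ∀ X Y Z, X.IsSymm → Y.IsSymm → Z.IsSymm → ip (X + Y) Z = ip X Z + ip Y Z)
    (h_smul : ∀ (c : ℝ) (X Y : Matrix (Fin n) (Fin n) ℝ), X.IsSymm → Y.IsSymm →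
      ip (c • X) Y = c * ip X Y)
    (h_pos : ∀ X, X.IsSymm → X ≠ 0 → 0 < ip X X) :
    (∀ R : Matrix (Fin n) (Fin n) ℝ, R * Rᵀ = 1 →
      ∀ X Y, X.IsSymm → Y.IsSymm → ip (R * X * Rᵀ) (R * Y * Rᵀ) = ip X Y) ↔
    (∃ α β : ℝ, 0 < α ∧ 0 < α + n * β ∧
      ∀ X : Matrix (Fin n) (Fin n) ℝ, X.IsSymm →
        ip X X = α * (X * X).trace + β * X.trace ^ 2) := by
  have hds : ∀ d : Fin n → ℝ, (diagonal d).IsSymm := fun d => Matrix.isSymm_diagonal d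
  constructor
  · intro hinv
    let B : (Fin n → ℝ) →ₗ[ℝ] (Fin n → ℝ) →ₗ[ℝ] ℝ :=
      LinearMap.mk₂ ℝ (fun d e => ip (diagonal d) (diagonal e))
        (fun d e f => by
          have := h_add _ _ _ (hds d) (hds e) (hds f)
          rwa [Matrix.diagonal_add] at this)
        (fun c d f => by
          have := h_smul c _ _ (hds d) (hds f)
          rwa [← Matrix.diagonal_smul] at this)
        (fun d e f => by
          have := h_add _ _ _ (hds e) (hds f) (hds d)
          rw [Matrix.diagonal_add] at this
          rw [h_symm _ _ (hds d) (hds e), h_symm _ _ (hds d) (hds f), h_symm _ _ (hds d) (hds _)]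
          exact this)
        (fun c d f => by
          have := h_smul c _ _ (hds f) (hds d)
          rw [← Matrix.diagonal_smul] at this
          rw [h_symm _ _ (hds d) (hds f), h_symm _ _ (hds d) (hds _)]
          exact this)
    have hB : ∀ d e, ip (diagonal d) (diagonal e) = B d e := fun d e => rfl
    have hBσ : ∀ (σ : Equiv.Perm (Fin n)) d e, B (d ∘ σ) (e ∘ σ) = B d e := by
      intro σ d e
      rw [← hB, ← hB, ← aux_perm, ← aux_perm]
      exact hinv _ (aux_perm_orth σ) _ _ (hds d) (hds e)
    have hBpos : ∀ d, d ≠ 0 → 0 < B d d := by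
      intro d hd
      apply h_pos _ (hds d)
      intro h
      exact hd (Matrix.diagonal_eq_zero.mp h)
    let s : Fin n → Fin n → ℝ := fun i => Pi.single i 1
    have hs : ∀ (σ : Equiv.Perm (Fin n)) i, s (σ i) ∘ σ = s i := by
      intro σ i
      ext k
      simp [s, Pi.single_apply]
    have hE : ∀ (σ : Equiv.Perm (Fin n)) i j, B (s (σ i)) (s (σ j)) = B (s i) (s j) := by
      intro σ i j
      rw [← hBσ σ, hs, hs]
    have hexp : ∀ d, B d d = ∑ i, ∑ j, d i * d j * B (s i) (s j) := by
      intro d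
      have hd : d = ∑ i, d i • s i := by
        ext k
        simp [s, Finset.sum_apply, Pi.single_apply]
      conv_lhs => rw [hd]
      simp only [map_sum, LinearMap.sum_apply, map_smul, LinearMap.smul_apply, smul_eq_mul,
        Finset.mul_sum]
      rw [Finset.sum_comm]
      refine Finset.sum_congr rfl fun i _ => Finset.sum_congr rfl fun j _ => by ring
    -- main reduction
    obtain ⟨a, b, hform⟩ : ∃ a b : ℝ, ∀ i j, B (s i) (s j) = if i = j then a + b else b := by
      rcases n with _ | _ | n
      · exact ⟨0, 0, fun i => i.elim0⟩
      · exact ⟨B (s 0) (s 0), 0, fun i j => by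
          have hi : i = 0 := by omega
          have hj : j = 0 := by omega
          simp [hi, hj]⟩
      · refine ⟨B (s 0) (s 0) - B (s 0) (s 1), B (s 0) (s 1), fun i j => ?_⟩
        split_ifs with h
        · subst h
          have := hE (Equiv.swap 0 i) 0 0
          rw [Equiv.swap_apply_left] at this
          rw [this]; ring
        · obtain ⟨σ, h0, h1⟩ := aux_exists_perm (0 : Fin (n+2)) 1 i j (by simp) h
          have := hE σ 0 1
          rwa [h0, h1] at this
    have hquad : ∀ d, B d d = a * ∑ i, d i * d i + b * (∑ i, d i) ^ 2 := by
      intro d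
      rw [hexp, sq, Finset.sum_mul_sum, Finset.mul_sum, Finset.mul_sum, ← Finset.sum_add_distrib]
      refine Finset.sum_congr rfl fun i _ => ?_
      have : ∀ j, d i * d j * B (s i) (s j) =
          (if i = j then a * (d i * d j) else 0) + b * (d i * d j) := by
        intro j
        rw [hform]
        split_ifs <;> ring
      simp only [this, Finset.sum_add_distrib, Finset.mul_sum]
      simp
    have hfin : ∀ X : Matrix (Fin n) (Fin n) ℝ, X.IsSymm →
        ip X X = a * (X * X).trace + b * X.trace ^ 2 := by
      intro X hX
      obtain ⟨R, d, hR, rfl⟩ := aux_spectral X hX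
      rw [hinv R hR _ _ (hds d) (hds d), (aux_trace R hR _).1, (aux_trace R hR _).2, hB, hquad,
        Matrix.diagonal_mul_diagonal, Matrix.trace_diagonal, Matrix.trace_diagonal]
    rcases Nat.eq_zero_or_pos n with h0 | hnpos
    · subst h0
      refine ⟨1, 0, by simp, by simp, fun X hX => ?_⟩
      rw [hfin X hX]
      simp [Matrix.trace]
    have hsum : 0 < a + n * b := by
      have h1 := hBpos (fun _ => 1) (fun h => by simpa using congrFun h ⟨0, hnpos⟩)
      rw [hquad] at h1
      simp at h1
      have hn : (0:ℝ) < n := by exact_mod_cast hnpos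
      have h2 : 0 < (n:ℝ) * (a + n * b) := by linarith
      exact pos_of_mul_pos_right h2 hn.le
    rcases n with _ | _ | n
    · omega
    · refine ⟨a + b, 0, by simpa using hsum, by simpa using hsum, fun X hX => ?_⟩
      rw [hfin X hX]
      simp [Matrix.trace, Matrix.mul_apply]
      ring
    · refine ⟨a, b, ?_, hsum, hfin⟩
      have h1 := hBpos (s 0 - s 1) (fun h => by simpa [s] using congrFun h 0)
      simp only [map_sub, LinearMap.sub_apply, hform] at h1
      simp at h1
      linarith
  · rintro ⟨α, β, -, -, hq⟩ R hR X Y hX hY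
    have pol : ∀ X Y : Matrix (Fin n) (Fin n) ℝ, X.IsSymm → Y.IsSymm →
        2 * ip X Y = ip (X + Y) (X + Y) - ip X X - ip Y Y := by
      intro X Y hX hY
      rw [h_add _ _ _ hX hY (hX.add hY), h_symm X _ hX (hX.add hY), h_symm Y _ hY (hX.add hY),
        h_add _ _ _ hX hY hX, h_add _ _ _ hX hY hY, h_symm Y X hY hX]
      ring
    have hc : ∀ X : Matrix (Fin n) (Fin n) ℝ, X.IsSymm →
        ip (R * X * Rᵀ) (R * X * Rᵀ) = ip X X := by
      intro X hX
      rw [hq _ (aux_conj_symm R X hX), hq X hX, (aux_trace R hR X).1, (aux_trace R hR X).2]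
    have h1 := pol _ _ (aux_conj_symm R X hX) (aux_conj_symm R Y hY)
    rw [← Matrix.add_mul, ← Matrix.mul_add, hc _ (hX.add hY), hc _ hX, hc _ hY,
      ← pol X Y hX hY] at h1
    linarith
end

section
/- An inner product ⟨·,·⟩ on Sym(n) is invariant under the group of signed permutation matrices (matrices εP_σ where ε is diagonal with entries in {−1,+1} and P_σ is a permutation matrix; invariance meaning ⟨UXUᵀ, UYUᵀ⟩ = ⟨X,Y⟩ for every signed permutation matrix U) if and only if there exist real numbers α, β, γ with α > 0, γ > β and γ + (n−1)β > 0 such that for all X ∈ Sym(n): ⟨X,X⟩ = γ·Σ_i X_{ii}² + α·Σ_{i≠j} X_{ij}² + β·Σ_{i≠j} X_{ii} X_{jj}. -/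
open Matrix Finset

lemma sp_conj_apply {n : ℕ} (e : Fin n → ℝ) (σ : Equiv.Perm (Fin n)) (M : Matrix (Fin n) (Fin n) ℝ)
    (i j : Fin n) :
    ((Matrix.diagonal e * σ.permMatrix ℝ) * M * (Matrix.diagonal e * σ.permMatrix ℝ)ᵀ) i j
      = e i * e j * M (σ i) (σ j) := by
  have hU : ∀ a b, (Matrix.diagonal e * σ.permMatrix ℝ) a b = if σ a = b then e a else 0 := by
    intro a b
    rw [Matrix.diagonal_mul]
    simp [Equiv.Perm.permMatrix, PEquiv.toMatrix_apply, eq_comm]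
  simp only [Matrix.mul_apply (M := _ * M), Matrix.mul_apply (N := M), Matrix.transpose_apply, hU]
  simp
  ring

lemma sp_core (n : ℕ) (B : Matrix (Fin n) (Fin n) ℝ →ₗ[ℝ] Matrix (Fin n) (Fin n) ℝ →ₗ[ℝ] ℝ)
    (hT : ∀ X Y, B Xᵀ Y = B X Y) (hS : ∀ X Y, B X Y = B Y X)
    (hP : ∀ X, X + Xᵀ ≠ 0 → 0 < B X X)
    (hI : ∀ (e : Fin n → ℝ), (∀ i, e i = 1 ∨ e i = -1) → ∀ σ : Equiv.Perm (Fin n), ∀ X Y,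
        B ((Matrix.diagonal e * σ.permMatrix ℝ) * X * (Matrix.diagonal e * σ.permMatrix ℝ)ᵀ)
           ((Matrix.diagonal e * σ.permMatrix ℝ) * Y * (Matrix.diagonal e * σ.permMatrix ℝ)ᵀ)
          = B X Y) :
    ∃ a b c : ℝ, 0 < a ∧ b < c ∧ 0 < c + ((n : ℝ) - 1) * b ∧
      ∀ X : Matrix (Fin n) (Fin n) ℝ, X.IsSymm →
        B X X = c * (∑ i, X i i ^ 2) + a * (∑ i, ∑ j, if i = j then 0 else X i j ^ 2)
          + b * (∑ i, ∑ j, if i = j then 0 else X i i * X j j) := by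
  obtain ⟨g, hg⟩ : ∃ g : Fin n → Fin n → Fin n → Fin n → ℝ, ∀ i j k l, g i j k l =
    B (Matrix.single i j 1) (Matrix.single k l 1) := ⟨_, fun _ _ _ _ => rfl⟩
  have hconj : ∀ (e : Fin n → ℝ) (σ : Equiv.Perm (Fin n)) i j,
      (Matrix.diagonal e * σ.permMatrix ℝ) * Matrix.single (σ i) (σ j) (1:ℝ) *
        (Matrix.diagonal e * σ.permMatrix ℝ)ᵀ = (e i * e j) • Matrix.single i j (1:ℝ) := by
    intro e σ i j
    ext a b
    rw [sp_conj_apply]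
    simp only [Matrix.single_apply, Matrix.smul_apply, EmbeddingLike.apply_eq_iff_eq, smul_eq_mul]
    grind
  have hgI : ∀ (e : Fin n → ℝ), (∀ i, e i = 1 ∨ e i = -1) → ∀ σ : Equiv.Perm (Fin n),
      ∀ i j k l, g (σ i) (σ j) (σ k) (σ l) = e i * e j * (e k * e l) * g i j k l := by
    intro e he σ i j k l
    rw [hg, ← hI e he σ, hconj, hconj, map_smul, map_smul, LinearMap.smul_apply, hg]
    simp only [smul_eq_mul]; ring
  have hgσ : ∀ σ : Equiv.Perm (Fin n), ∀ i j k l, g (σ i) (σ j) (σ k) (σ l) = g i j k l := by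
    intro σ i j k l
    rw [hgI (fun _ => 1) (by simp)]; simp
  have hgs : ∀ p i j k l, g i j k l = (if i = p then -1 else 1) * (if j = p then -1 else 1) *
      ((if k = p then -1 else 1) * (if l = p then -1 else 1)) * g i j k l := by
    intro p i j k l
    exact hgI (fun x => if x = p then -1 else 1) (by intro i; by_cases h : i = p <;> simp [h]) 1 i j k l
  have hgT : ∀ i j k l, g j i k l = g i j k l := by
    intro i j k l
    rw [hg, hg, ← hT, Matrix.transpose_single]
  have hgS : ∀ i j k l, g i j k l = g k l i j := by
    intro i j k l
    rw [hg, hg, hS]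
  have hexp : ∀ X : Matrix (Fin n) (Fin n) ℝ,
      B X X = ∑ i, ∑ j, ∑ k, ∑ l, X i j * X k l * g i j k l := by
    intro X
    have hl : ∀ L : Matrix (Fin n) (Fin n) ℝ →ₗ[ℝ] ℝ,
        L X = ∑ i, ∑ j, X i j * L (Matrix.single i j (1:ℝ)) := by
      intro L
      have hX : X = ∑ i, ∑ j, X i j • Matrix.single i j (1:ℝ) := by
        conv_lhs => rw [Matrix.matrix_eq_sum_single X]
        simp
      conv_lhs => rw [hX]
      simp only [map_sum, map_smul, smul_eq_mul]
    have h1 := hl (B.flip X)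
    simp only [LinearMap.flip_apply] at h1
    rw [h1]
    refine Finset.sum_congr rfl fun i _ => Finset.sum_congr rfl fun j _ => ?_
    rw [hl (B (Matrix.single i j 1))]
    simp only [Finset.mul_sum, hg, mul_assoc]
  -- reduction
  suffices H : ∃ a b c : ℝ, 0 < a ∧ (∀ i j, i ≠ j → g i j i j = a / 2) ∧
      (∀ i, g i i i i = c) ∧ (∀ i k, i ≠ k → g i i k k = b) ∧ b < c ∧ (n = 0 → b < c ∧ 0 < c - b) by
    obtain ⟨a, b, c, ha, hga, hgc, hgb, hbc, hn0⟩ := H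
    have hform : ∀ X : Matrix (Fin n) (Fin n) ℝ, X.IsSymm →
        B X X = c * (∑ i, X i i ^ 2) + a * (∑ i, ∑ j, if i = j then 0 else X i j ^ 2)
          + b * (∑ i, ∑ j, if i = j then 0 else X i i * X j j) := by
      intro X hX
      have hgg : ∀ i j k l, g i j k l = (if i = j then (if k = l then (if i = k then c else b) else 0)
          else (if i = k then if j = l then a / 2 else 0 else 0) +
            (if i = l then if j = k then a / 2 else 0 else 0)) := by
        intro i j k l
        have h1 := hgs i i j k l
        have h2 := hgs j i j k l
        have h3 := hgs k i j k l
        have h4 := hgs l i j k l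
        by_cases hij : i = j
        · subst hij
          by_cases hkl : k = l
          · subst hkl
            by_cases hik : i = k
            · subst hik; simp [hgc]
            · simp [hik, hgb]
          · simp [hkl, Ne.symm hkl] at h3 ⊢
            grind
        · by_cases hik : i = k
          · subst hik
            by_cases hjl : j = l
            · subst hjl
              simp [hij, hga]
            · simp [hij, hjl, Ne.symm hij, Ne.symm hjl] at h2 ⊢
              grind
          · by_cases hil : i = l
            · subst hil
              by_cases hjk : j = k
              · subst hjk
                simp [hij, hgT j i j i, hga j i (Ne.symm hij)]
              · simp [hij, hik, hjk, Ne.symm hij, Ne.symm hjk] at h2 ⊢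
                grind
            · simp [hij, hik, hil, Ne.symm hij, Ne.symm hik, Ne.symm hil] at h1 ⊢
              grind
      rw [hexp]
      simp only [Finset.mul_sum, ← Finset.sum_add_distrib]
      have key : ∀ i j, ∑ k, ∑ l, X i j * X k l * g i j k l =
          if i = j then X i i * (∑ k, (if i = k then c else b) * X k k) else a * X i j ^ 2 := by
        intro i j
        have hs : X j i = X i j := by rw [← hX.apply]
        by_cases hij : i = j
        · subst hij
          simp only [hgg, if_true, mul_ite, mul_zero, Finset.sum_ite_eq, Finset.mem_univ, Finset.mul_sum, ite_mul]
          refine Finset.sum_congr rfl fun k _ => ?_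
          split_ifs <;> ring
        · simp only [hgg, if_neg hij, mul_add, Finset.sum_add_distrib, mul_ite, mul_zero]
          have e1 : ∑ k, ∑ l, (if i = k then if j = l then X i j * X k l * (a/2) else 0 else 0)
            = X i j * X i j * (a/2) := by
            rw [Finset.sum_eq_single i] <;> simp +contextual [eq_comm]
          have e2 : ∑ k, ∑ l, (if i = l then if j = k then X i j * X k l * (a/2) else 0 else 0)
            = X i j * X j i * (a/2) := by
            rw [Finset.sum_eq_single j] <;> simp +contextual [eq_comm]
          rw [e1, e2, hs]; ring
      simp only [key]
      refine Finset.sum_congr rfl fun i _ => ?_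
      have e3 : c * X i i ^ 2 = ∑ j, if i = j then c * X i i ^ 2 else 0 := by simp
      have e4 : ∑ j, (if i = j then X i i * (∑ k, (if i = k then c else b) * X k k) else 0) = 
         ∑ j, X i i * ((if i = j then c else b) * X j j) := by simp [Finset.mul_sum]
      have e5 : ∑ j, (if i = j then X i i * (∑ k, (if i = k then c else b) * X k k) else a * X i j ^ 2)
         = ∑ j, (X i i * ((if i = j then c else b) * X j j) + if i = j then 0 else a * X i j ^ 2) := by
        rw [Finset.sum_add_distrib, ← e4, ← Finset.sum_add_distrib]
        refine Finset.sum_congr rfl fun j _ => ?_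
        split_ifs <;> ring
      rw [e5, e3, ← Finset.sum_add_distrib, ← Finset.sum_add_distrib]
      refine Finset.sum_congr rfl fun j _ => ?_
      by_cases hij : i = j
      · subst hij; simp; ring
      · simp [hij]; ring
    refine ⟨a, b, c, ha, hbc, ?_, hform⟩
    rcases Nat.eq_zero_or_pos n with hn | hn
    · have := (hn0 hn).2
      subst hn; simp; linarith
    · have h1 := hP 1 (by
        intro h
        have := congrFun (congrFun h ⟨0, hn⟩) ⟨0, hn⟩
        simp at this)
      rw [hform 1 (by simp)] at h1
      have e1 : ∑ i : Fin n, ∑ j : Fin n, (if i = j then (0:ℝ) else (1 : Matrix (Fin n) (Fin n) ℝ) i j ^ 2) = 0 := by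
        refine Finset.sum_eq_zero fun i _ => Finset.sum_eq_zero fun j _ => ?_
        split_ifs with h <;> simp [h]
      have e2 : ∑ i : Fin n, ∑ j : Fin n, (if i = j then (0:ℝ) else 1) = n * (n - 1) := by
        have : ∀ i j : Fin n, (if i = j then (0:ℝ) else 1) = 1 - if i = j then 1 else 0 := by
          intro i j; split_ifs <;> simp
        simp [this, Finset.sum_sub_distrib]
        ring
      simp only [e1, Matrix.one_apply_eq, mul_one, e2] at h1
      simp at h1
      have hn' : (0:ℝ) < n := by exact_mod_cast hn
      have : 0 < (n:ℝ) * (c + (n - 1) * b) := by linarith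
      exact (pos_iff_pos_of_mul_pos this).1 hn'
  have hgpos : ∀ i j, 0 < g i j i j := by
    intro i j
    rw [hg]
    apply hP
    intro h
    have := congrFun (congrFun h i) j
    simp [Matrix.single_apply] at this
    split_ifs at this <;> norm_num at this
  rcases n with _ | _ | n
  · exact ⟨1, 0, 1, one_pos, fun i => i.elim0, fun i => i.elim0, fun i => i.elim0, one_pos, by simp⟩
  · have : Subsingleton (Fin (0+1)) := inferInstanceAs (Subsingleton (Fin 1))
    refine ⟨1, 0, g 0 0 0 0, one_pos, ?_, ?_, ?_, hgpos _ _, by simp⟩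
    · intro i j h; exact absurd (Subsingleton.elim i j) h
    · intro i; rw [Subsingleton.elim i 0]
    · intro i j h; exact absurd (Subsingleton.elim i j) h
  · have htr : ∀ i j : Fin (n+2), i ≠ j → ∃ σ : Equiv.Perm (Fin (n+2)), σ 0 = i ∧ σ 1 = j := by
      intro i j hij
      have h01 : (0 : Fin (n+2)) ≠ 1 := by simp
      exact (MulAction.is_two_pretransitive_iff (G := Equiv.Perm (Fin (n+2))) (α := Fin (n+2))).1
        (Equiv.Perm.isMultiplyPretransitive _ 2) h01 hij
    refine ⟨2 * g 0 1 0 1, g 0 0 1 1, g 0 0 0 0, by linarith [hgpos 0 1], ?_, ?_, ?_, ?_, by simp⟩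
    · intro i j hij
      obtain ⟨σ, rfl, rfl⟩ := htr i j hij
      rw [hgσ]; ring
    · intro i
      have := hgσ (Equiv.swap 0 i) 0 0 0 0
      simpa using this
    · intro i j hij
      obtain ⟨σ, rfl, rfl⟩ := htr i j hij
      rw [hgσ]
    · have h1 := hP (Matrix.single 0 0 1 - Matrix.single 1 1 1) (by
        intro h
        have := congrFun (congrFun h 0) 0
        simp [Matrix.single_apply] at this)
      simp only [map_sub, LinearMap.sub_apply, ← hg] at h1
      have h2 := hgσ (Equiv.swap 0 1) 0 0 0 0
      simp at h2
      have h3 := hgS 1 1 0 0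
      linarith

/-- An inner product on `Sym(n)` is invariant under signed permutation matrices iff
it has the form `⟨X,X⟩ = γ Σ_i X_{ii}² + α Σ_{i≠j} X_{ij}² + β Σ_{i≠j} X_{ii}X_{jj}` with
`α > 0`, `γ > β` and `γ + (n−1)β > 0`. -/
theorem signed_permutation_invariant_inner_products (n : ℕ)
    (ip : Matrix (Fin n) (Fin n) ℝ → Matrix (Fin n) (Fin n) ℝ → ℝ)
    (h_symm : ∀ X Y, X.IsSymm → Y.IsSymm → ip X Y = ip Y X)
    (h_add : ∀ X Y Z, X.IsSymm → Y.IsSymm → Z.IsSymm → ip (X + Y) Z = ip X Z + ip Y Z)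
    (h_smul : ∀ (c : ℝ) (X Y : Matrix (Fin n) (Fin n) ℝ), X.IsSymm → Y.IsSymm →
      ip (c • X) Y = c * ip X Y)
    (h_pos : ∀ X, X.IsSymm → X ≠ 0 → 0 < ip X X) :
    (∀ (e : Fin n → ℝ), (∀ i, e i = 1 ∨ e i = -1) → ∀ σ : Equiv.Perm (Fin n),
      ∀ X Y : Matrix (Fin n) (Fin n) ℝ, X.IsSymm → Y.IsSymm →
        ip ((Matrix.diagonal e * σ.permMatrix ℝ) * X * (Matrix.diagonal e * σ.permMatrix ℝ)ᵀ)
           ((Matrix.diagonal e * σ.permMatrix ℝ) * Y * (Matrix.diagonal e * σ.permMatrix ℝ)ᵀ)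
          = ip X Y) ↔
    (∃ a b c : ℝ, 0 < a ∧ b < c ∧ 0 < c + ((n : ℝ) - 1) * b ∧
      ∀ X : Matrix (Fin n) (Fin n) ℝ, X.IsSymm →
        ip X X = c * (∑ i, X i i ^ 2) + a * (∑ i, ∑ j, if i = j then 0 else X i j ^ 2)
          + b * (∑ i, ∑ j, if i = j then 0 else X i i * X j j)) := by
  have hsymU : ∀ (e : Fin n → ℝ) (σ : Equiv.Perm (Fin n)) (X : Matrix (Fin n) (Fin n) ℝ), X.IsSymm →
      ((Matrix.diagonal e * σ.permMatrix ℝ) * X * (Matrix.diagonal e * σ.permMatrix ℝ)ᵀ).IsSymm := by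
    intro e σ X hX
    ext i j
    rw [Matrix.transpose_apply, sp_conj_apply, sp_conj_apply, hX.apply]; ring
  constructor
  · intro hinv
    obtain ⟨sy, hsy⟩ : ∃ sy : Matrix (Fin n) (Fin n) ℝ → Matrix (Fin n) (Fin n) ℝ,
      ∀ X, sy X = (1/2:ℝ) • (X + Xᵀ) := ⟨_, fun _ => rfl⟩
    have sys : ∀ X, (sy X).IsSymm := by
      intro X; rw [hsy]; ext i j; simp; ring
    have syadd : ∀ X Y, sy (X + Y) = sy X + sy Y := by
      intro X Y; simp only [hsy]; ext i j; simp; ring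
    have sysmul : ∀ (c : ℝ) X, sy (c • X) = c • sy X := by
      intro c X; simp only [hsy]; ext i j; simp; ring
    have syself : ∀ X, X.IsSymm → sy X = X := by
      intro X hX; rw [hsy, hX.eq]; ext i j; simp; ring
    have := sp_core n (LinearMap.mk₂ ℝ (fun X Y => ip (sy X) (sy Y))
      (fun X Y Z => by rw [syadd, h_add _ _ _ (sys _) (sys _) (sys _)])
      (fun c X Y => by rw [sysmul, h_smul _ _ _ (sys _) (sys _), smul_eq_mul])
      (fun X Y Z => by
        rw [syadd, h_symm _ _ (sys _) ((sys _).add (sys _)), h_add _ _ _ (sys _) (sys _) (sys _),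
          h_symm _ _ (sys _) (sys _), h_symm (sy Z) _ (sys _) (sys _)])
      (fun c X Y => by
        rw [sysmul, h_symm _ _ (sys _) ((sys _).smul c), h_smul _ _ _ (sys _) (sys _), smul_eq_mul,
          h_symm _ _ (sys _) (sys _)]))
      (fun X Y => by
        simp only [LinearMap.mk₂_apply]
        rw [hsy Xᵀ, hsy X, Matrix.transpose_transpose, add_comm])
      (fun X Y => h_symm _ _ (sys _) (sys _))
      (fun X hX => by
        simp only [LinearMap.mk₂_apply]
        refine h_pos _ (sys _) ?_
        rw [hsy]
        exact smul_ne_zero (by norm_num) hX)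
      (fun e he σ X Y => by
        simp only [LinearMap.mk₂_apply]
        have hc : ∀ X, sy ((Matrix.diagonal e * σ.permMatrix ℝ) * X *
            (Matrix.diagonal e * σ.permMatrix ℝ)ᵀ) = (Matrix.diagonal e * σ.permMatrix ℝ) * sy X *
            (Matrix.diagonal e * σ.permMatrix ℝ)ᵀ := by
          intro X
          ext i j
          rw [sp_conj_apply, hsy, hsy, Matrix.smul_apply, Matrix.add_apply, Matrix.transpose_apply,
            sp_conj_apply, sp_conj_apply]
          simp; ring
        rw [hc, hc]
        exact hinv e he σ _ _ (sys _) (sys _))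
    obtain ⟨a, b, c, ha, hb, hc, hf⟩ := this
    refine ⟨a, b, c, ha, hb, hc, fun X hX => ?_⟩
    rw [← hf X hX, LinearMap.mk₂_apply, syself X hX]
  · rintro ⟨a, b, c, -, -, -, hf⟩ e he σ X Y hX hY
    have pol : ∀ X Y, X.IsSymm → Y.IsSymm → ip (X + Y) (X + Y) = ip X X + 2 * ip X Y + ip Y Y := by
      intro X Y hX hY
      rw [h_add _ _ _ hX hY (hX.add hY), h_symm X _ hX (hX.add hY), h_symm Y _ hY (hX.add hY),
        h_add _ _ _ hX hY hX, h_add _ _ _ hX hY hY, h_symm Y X hY hX]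
      ring
    have hee : ∀ i, e i * e i = 1 := by
      intro i; rcases he i with h | h <;> simp [h]
    have hq : ∀ X, X.IsSymm →
        ip ((Matrix.diagonal e * σ.permMatrix ℝ) * X * (Matrix.diagonal e * σ.permMatrix ℝ)ᵀ)
          ((Matrix.diagonal e * σ.permMatrix ℝ) * X * (Matrix.diagonal e * σ.permMatrix ℝ)ᵀ)
          = ip X X := by
      intro X hX
      rw [hf _ (hsymU e σ X hX), hf X hX]
      simp only [sp_conj_apply, hee, one_mul, mul_pow]
      have hee2 : ∀ i, e i ^ 2 = 1 := by intro i; rw [sq, hee]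
      simp only [hee2, one_mul]
      have r1 : ∑ i, X (σ i) (σ i) ^ 2 = ∑ i, X i i ^ 2 := Equiv.sum_comp σ (fun i => X i i ^ 2)
      have r2 : ∀ F : Fin n → Fin n → ℝ, ∑ i, ∑ j, (if i = j then 0 else F (σ i) (σ j)) =
          ∑ i, ∑ j, if i = j then 0 else F i j := by
        intro F
        rw [← Equiv.sum_comp σ (fun i => ∑ j, if i = j then 0 else F i j)]
        refine Finset.sum_congr rfl fun i _ => ?_
        rw [← Equiv.sum_comp σ (fun j => if σ i = j then 0 else F (σ i) j)]
        simp
      rw [r1, r2 (fun i j => X i j ^ 2), r2 (fun i j => X i i * X j j)]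
    have p1 := pol _ _ (hsymU e σ X hX) (hsymU e σ Y hY)
    rw [← Matrix.add_mul, ← Matrix.mul_add, hq _ (hX.add hY), hq X hX, hq Y hY, pol X Y hX hY] at p1
    linarith
end

section
/- Let φ : (0,∞)² → (0,∞) be a symmetric function, ψ = φ^{−1/2}, and let D = diag(d₁,…,d_n) be a positive diagonal matrix. Define Ψ_D : Sym(n) → Sym(n) by [Ψ_D(X)]_{ij} = ψ(d_i,d_j)·X_{ij}. Let α, β ∈ ℝ with α > 0 and α + nβ > 0, and define the extended kernel quadratic form g_D(X,X) = α·tr(Ψ_D(X)²) + β·tr(Ψ_D(X))² on Sym(n). Then the dual (cometric) quadratic form under the Frobenius identification — namely ω ↦ tr(ω X'(ω)) where X'(ω) is the unique element of Sym(n) with g_D(X, X'(ω)) = tr(ωX) for all X ∈ Sym(n) — equals the extended kernel quadratic form associated to (1/φ, 1/α, −β/(α(α+nβ))): that is, tr(ω X'(ω)) = (1/α)·tr(Ψ*_D(ω)²) − (β/(α(α+nβ)))·tr(Ψ*_D(ω))², where [Ψ*_D(ω)]_{ij} = ω_{ij}/ψ(d_i,d_j). -/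
open Matrix Finset

/-- cometric of an extended kernel metric. With `ψ = φ^{−1/2}`,
`g_D(X,Y) = α tr(Ψ_D(X)Ψ_D(Y)) + β tr(Ψ_D(X)) tr(Ψ_D(Y))`, `α > 0`, `α + nβ > 0`, the Riesz
representative `X'` of `X ↦ tr(ωX)` exists, is unique among symmetric matrices, and the dual
quadratic form is the extended kernel form associated to `(1/φ, 1/α, −β/(α(α+nβ)))`. -/
theorem extended_kernel_metric_cometric (n : ℕ) (φ : ℝ → ℝ → ℝ)
    (hφs : ∀ x y : ℝ, 0 < x → 0 < y → φ x y = φ y x)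
    (hφp : ∀ x y : ℝ, 0 < x → 0 < y → 0 < φ x y)
    (ψ : ℝ → ℝ → ℝ) (hψ : ∀ x y : ℝ, 0 < x → 0 < y → ψ x y = (Real.sqrt (φ x y))⁻¹)
    (d : Fin n → ℝ) (hd : ∀ i, 0 < d i)
    (α β : ℝ) (hα : 0 < α) (hαβ : 0 < α + n * β)
    (Ψ : Matrix (Fin n) (Fin n) ℝ → Matrix (Fin n) (Fin n) ℝ)
    (hΨ : ∀ X, Ψ X = Matrix.of fun i j => ψ (d i) (d j) * X i j)
    (Ψs : Matrix (Fin n) (Fin n) ℝ → Matrix (Fin n) (Fin n) ℝ)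
    (hΨs : ∀ ω, Ψs ω = Matrix.of fun i j => ω i j / ψ (d i) (d j))
    (g : Matrix (Fin n) (Fin n) ℝ → Matrix (Fin n) (Fin n) ℝ → ℝ)
    (hg : ∀ X Y, g X Y = α * (Ψ X * Ψ Y).trace + β * (Ψ X).trace * (Ψ Y).trace)
    (ω : Matrix (Fin n) (Fin n) ℝ) (hω : ω.IsSymm) :
    ∃ X' : Matrix (Fin n) (Fin n) ℝ, X'.IsSymm ∧
      (∀ X : Matrix (Fin n) (Fin n) ℝ, X.IsSymm → g X X' = (ω * X).trace) ∧
      (∀ Y : Matrix (Fin n) (Fin n) ℝ, Y.IsSymm →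
        (∀ X : Matrix (Fin n) (Fin n) ℝ, X.IsSymm → g X Y = (ω * X).trace) → Y = X') ∧
      (ω * X').trace = (1 / α) * (Ψs ω * Ψs ω).trace
        - (β / (α * (α + n * β))) * (Ψs ω).trace ^ 2 := by
  have hcp : ∀ i j, 0 < ψ (d i) (d j) := fun i j => by
    rw [hψ _ _ (hd i) (hd j)]
    exact inv_pos.mpr (Real.sqrt_pos.mpr (hφp _ _ (hd i) (hd j)))
  have hcs : ∀ i j, ψ (d i) (d j) = ψ (d j) (d i) := fun i j => by
    rw [hψ _ _ (hd i) (hd j), hψ _ _ (hd j) (hd i), hφs _ _ (hd i) (hd j)]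
  have h1 : ∀ M, Ψ (Ψs M) = M := fun M => by
    rw [hΨ, hΨs]; ext i j
    have := (hcp i j).ne'
    simp only [Matrix.of_apply]; field_simp
  have h2 : ∀ M, Ψs (Ψ M) = M := fun M => by
    rw [hΨ, hΨs]; ext i j
    have := (hcp i j).ne'
    simp only [Matrix.of_apply]; field_simp
  have h3 : ∀ M, M.IsSymm → (Ψs M).IsSymm := fun M hM => by
    rw [hΨs]; ext i j
    simp only [Matrix.transpose_apply, Matrix.of_apply]
    rw [hcs j i, hM.apply]
  have h3' : ∀ M, M.IsSymm → (Ψ M).IsSymm := fun M hM => by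
    rw [hΨ]; ext i j
    simp only [Matrix.transpose_apply, Matrix.of_apply]
    rw [hcs j i, hM.apply]
  have h4 : ∀ X, (Ψ X * Ψs ω).trace = (ω * X).trace := fun X => by
    rw [Matrix.trace_mul_comm, hΨ, hΨs]
    simp only [Matrix.trace, Matrix.diag_apply, Matrix.mul_apply, Matrix.of_apply]
    refine Finset.sum_congr rfl fun i _ => Finset.sum_congr rfl fun j _ => ?_
    have := (hcp i j).ne'
    rw [hcs j i]; field_simp
  have h5 : ∀ X Y, g X Y = (Ψ X * (α • Ψ Y + (β * (Ψ Y).trace) • (1 : Matrix (Fin n) (Fin n) ℝ))).trace :=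
    fun X Y => by
      rw [hg, Matrix.mul_add, Matrix.trace_add, Matrix.mul_smul, Matrix.mul_smul, Matrix.mul_one,
        Matrix.trace_smul, Matrix.trace_smul, smul_eq_mul, smul_eq_mul]
      ring
  have hα' := hα.ne'
  have hαβ' := hαβ.ne'
  have hαβ2 : α + β * n ≠ 0 := by rwa [mul_comm β]
  set W := Ψs ω with hW
  have hWs : W.IsSymm := h3 _ hω
  have h1s : (1 : Matrix (Fin n) (Fin n) ℝ).IsSymm := Matrix.isSymm_one
  let Z : Matrix (Fin n) (Fin n) ℝ :=
    (1 / α) • (W - (β * W.trace / (α + n * β)) • (1 : Matrix (Fin n) (Fin n) ℝ))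
  have hZ : Z = (1 / α) • (W - (β * W.trace / (α + n * β)) • (1 : Matrix (Fin n) (Fin n) ℝ)) := rfl
  have hZt : Z.trace = W.trace / (α + n * β) := by
    rw [hZ, Matrix.trace_smul, Matrix.trace_sub, Matrix.trace_smul, Matrix.trace_one,
      Fintype.card_fin, smul_eq_mul, smul_eq_mul]
    field_simp
    ring
  have hZW : α • Z + (β * Z.trace) • (1 : Matrix (Fin n) (Fin n) ℝ) = W := by
    rw [hZt, hZ, smul_smul, mul_one_div_cancel hα', one_smul, mul_div_assoc, sub_add_cancel]
  have hZs : Z.IsSymm := (hWs.sub (h1s.smul _)).smul _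
  refine ⟨Ψs Z, h3 _ hZs, ?_, ?_, ?_⟩
  · intro X _
    rw [h5, h1, hZW, h4]
  · intro Y hY hYX
    let P := α • Ψ Y + (β * (Ψ Y).trace) • (1 : Matrix (Fin n) (Fin n) ℝ)
    have hP : P = α • Ψ Y + (β * (Ψ Y).trace) • (1 : Matrix (Fin n) (Fin n) ℝ) := rfl
    have hPs : (P - W).IsSymm := (((h3' _ hY).smul _).add (h1s.smul _)).sub hWs
    have key := hYX (Ψs (P - W)) (h3 _ hPs)
    rw [h5, ← h4, h1, ← hP, ← sub_eq_zero, ← Matrix.trace_sub, ← Matrix.mul_sub] at key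
    have hz : P - W = 0 := by
      rw [← Matrix.trace_conjTranspose_mul_self_eq_zero_iff,
        Matrix.conjTranspose_eq_transpose_of_trivial, hPs.eq]
      exact key
    have hPW : P = W := sub_eq_zero.mp hz
    have ht : (Ψ Y).trace = W.trace / (α + n * β) := by
      rw [← hPW, hP, Matrix.trace_add, Matrix.trace_smul, Matrix.trace_smul, Matrix.trace_one,
        Fintype.card_fin, smul_eq_mul, smul_eq_mul]
      field_simp
    have hYZ : Ψ Y = Z := by
      rw [hZ, mul_div_assoc, ← ht, ← hPW, hP, add_sub_cancel_right, smul_smul,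
        one_div_mul_cancel hα', one_smul]
    rw [← hYZ, h2]
  · rw [← h4, h1, hZ, Matrix.smul_mul, Matrix.sub_mul, Matrix.smul_mul, Matrix.one_mul,
      Matrix.trace_smul, Matrix.trace_sub, Matrix.trace_smul, smul_eq_mul, smul_eq_mul]
    field_simp
end

section
/- Let (g_Σ)_{Σ ∈ SPD(n)} be an O(n)-invariant family of inner products on Sym(n), i.e. g_{RΣRᵀ}(RXRᵀ, RXRᵀ) = g_Σ(X,X) for all Σ ∈ SPD(n), X ∈ Sym(n) and R ∈ O(n). Then there exist functions γ, α : (0,∞)ⁿ → (0,∞) and β : (0,∞)ⁿ → ℝ such that for every positive diagonal matrix D = diag(d₁,…,d_n) and every X ∈ Sym(n): g_D(X,X) = Σ_i γ(d_i, d_{k≠i}) X_{ii}² + Σ_{i≠j} α(d_i, d_j, d_{k≠i,j}) X_{ij}² + Σ_{i≠j} β(d_i, d_j, d_{k≠i,j}) X_{ii} X_{jj}, where moreover: (Compatibility) γ = α + β on the set {d ∈ (0,∞)ⁿ : d₁ = d₂}; (Positivity) for all d ∈ (0,∞)ⁿ, the symmetric matrix S(d) with S_{ii}(d) = γ(d_i,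 d_{k≠i}) and S_{ij}(d) = β(d_i, d_j, d_{k≠i,j}) for i ≠ j is positive definite; (Symmetry) γ is (1,n−1)-symmetric and α, β are (2,n−2)-symmetric. -/
open Matrix Finset

/-- A vector in `ℝⁿ` is positive if all its entries are. -/
def PosVec {n : ℕ} (d : Fin n → ℝ) : Prop := ∀ i, 0 < d i

/-- The vector `(d_i, d_{k≠i})`: entries of `d` reordered so that `d i` comes first, the
remaining entries being the `d k` for `k ≠ i` (in some order). -/
def reord1 {n : ℕ} (hn : 2 ≤ n) (d : Fin n → ℝ) (i : Fin n) : Fin n → ℝ :=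
  d ∘ (Equiv.swap (⟨0, by omega⟩ : Fin n) i)

/-- A permutation sending `0 ↦ i` and `1 ↦ j` (for `i ≠ j`). -/
def perm2 {n : ℕ} (hn : 2 ≤ n) (i j : Fin n) : Equiv.Perm (Fin n) :=
  Equiv.swap (⟨0, by omega⟩ : Fin n) i *
    Equiv.swap (⟨1, by omega⟩ : Fin n) (Equiv.swap (⟨0, by omega⟩ : Fin n) i j)

/-- The vector `(d_i, d_j, d_{k≠i,j})`: entries of `d` reordered so that `d i, d j` come first,
the remaining entries being the `d k` for `k ≠ i,j` (in some order). -/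
def reord2 {n : ℕ} (hn : 2 ≤ n) (d : Fin n → ℝ) (i j : Fin n) : Fin n → ℝ :=
  d ∘ (perm2 hn i j)

/-- `f` is `(1,n−1)`-symmetric: invariant under all permutations of its last `n−1` variables. -/
def Sym1n {n : ℕ} (hn : 2 ≤ n) (f : (Fin n → ℝ) → ℝ) : Prop :=
  ∀ σ : Equiv.Perm (Fin n), σ ⟨0, by omega⟩ = (⟨0, by omega⟩ : Fin n) →
    ∀ d : Fin n → ℝ, PosVec d → f (d ∘ σ) = f d

/-- `f` is `(2,n−2)`-symmetric: invariant under all permutations of its first `2` variables and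
of its last `n−2` variables. -/
def Sym2n {n : ℕ} (hn : 2 ≤ n) (f : (Fin n → ℝ) → ℝ) : Prop :=
  ∀ σ : Equiv.Perm (Fin n),
    ((σ ⟨0, by omega⟩ = (⟨0, by omega⟩ : Fin n) ∧ σ ⟨1, by omega⟩ = (⟨1, by omega⟩ : Fin n)) ∨
     (σ ⟨0, by omega⟩ = (⟨1, by omega⟩ : Fin n) ∧ σ ⟨1, by omega⟩ = (⟨0, by omega⟩ : Fin n))) →
    ∀ d : Fin n → ℝ, PosVec d → f (d ∘ σ) = f d

/-- The symmetric matrix `S(d)` with `S_{ii}(d) = γ(d_i, d_{k≠i})` and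
`S_{ij}(d) = β(d_i, d_j, d_{k≠i,j})` for `i ≠ j`. -/
def Smat {n : ℕ} (hn : 2 ≤ n) (γ β : (Fin n → ℝ) → ℝ) (d : Fin n → ℝ) :
    Matrix (Fin n) (Fin n) ℝ :=
  Matrix.of fun i j => if i = j then γ (reord1 hn d i) else β (reord2 hn d i j)

/-- The compatibility condition: `γ = α + β` on `{d : d₁ = d₂}`. -/
def CompatCond {n : ℕ} (hn : 2 ≤ n) (γ α β : (Fin n → ℝ) → ℝ) : Prop :=
  ∀ d : Fin n → ℝ, PosVec d → d ⟨0, by omega⟩ = d ⟨1, by omega⟩ → γ d = α d + β d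

/-- The positivity condition: `S(d)` is positive definite for every positive `d`. -/
def PositivityCond {n : ℕ} (hn : 2 ≤ n) (γ β : (Fin n → ℝ) → ℝ) : Prop :=
  ∀ d : Fin n → ℝ, PosVec d → (Smat hn γ β d).PosDef

/-- The bilinear form
`g_D(X,Y) = Σ_i γ(d_i,d_{k≠i}) X_{ii}Y_{ii} + Σ_{i≠j} α(d_i,d_j,d_{k≠i,j}) X_{ij}Y_{ij}
 + Σ_{i≠j} β(d_i,d_j,d_{k≠i,j}) X_{ii}Y_{jj}` at the positive diagonal matrix `D = diag d`. -/
def gD {n : ℕ} (hn : 2 ≤ n) (γ α β : (Fin n → ℝ) → ℝ) (d : Fin n → ℝ)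
    (X Y : Matrix (Fin n) (Fin n) ℝ) : ℝ :=
  (∑ i, γ (reord1 hn d i) * X i i * Y i i) +
  (∑ i, ∑ j, if i = j then 0 else α (reord2 hn d i j) * X i j * Y i j) +
  (∑ i, ∑ j, if i = j then 0 else β (reord2 hn d i j) * X i i * Y j j)

/-- Frobenius norm of a real matrix. -/
noncomputable def frobNorm {n : ℕ} (A : Matrix (Fin n) (Fin n) ℝ) : ℝ :=
  Real.sqrt (∑ i, ∑ j, (A i j) ^ 2)


namespace ONInv

abbrev M (n : ℕ) := Matrix (Fin n) (Fin n) ℝ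

/-- standard basis matrix -/
noncomputable def e {n : ℕ} (i j : Fin n) : M n := Matrix.single i j 1

/-- properties of the extracted bilinear forms -/
structure Good {n : ℕ} (b : (Fin n → ℝ) → M n →ₗ[ℝ] M n →ₗ[ℝ] ℝ) : Prop where
  symm : ∀ d, PosVec d → ∀ X Y, b d X Y = b d Y X
  tr : ∀ d, PosVec d → ∀ X Y, b d Xᵀ Y = b d X Y
  pos : ∀ d, PosVec d → ∀ X, X.IsSymm → X ≠ 0 → 0 < b d X X
  perm : ∀ d, PosVec d → ∀ (s : Equiv.Perm (Fin n)) X Y,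
    b (d ∘ s) (X.submatrix s s) (Y.submatrix s s) = b d X Y
  rot : ∀ d, PosVec d → ∀ R : M n, R * Rᵀ = 1 → R * diagonal d = diagonal d * R → ∀ X Y,
    b d (R * X * Rᵀ) (R * Y * Rᵀ) = b d X Y

lemma exists_good (n : ℕ)
    (g : M n → M n → M n → ℝ)
    (hgsym : ∀ Sig : M n, Sig.PosDef →
      ∀ X Y, X.IsSymm → Y.IsSymm → g Sig X Y = g Sig Y X)
    (hgadd : ∀ Sig : M n, Sig.PosDef →
      ∀ X Y Z, X.IsSymm → Y.IsSymm → Z.IsSymm → g Sig (X + Y) Z = g Sig X Z + g Sig Y Z)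
    (hgsmul : ∀ Sig : M n, Sig.PosDef →
      ∀ (c : ℝ) (X Y : M n), X.IsSymm → Y.IsSymm →
        g Sig (c • X) Y = c * g Sig X Y)
    (hgpos : ∀ Sig : M n, Sig.PosDef →
      ∀ X, X.IsSymm → X ≠ 0 → 0 < g Sig X X)
    (hinv : ∀ R : M n, R * Rᵀ = 1 →
      ∀ Sig : M n, Sig.PosDef → ∀ X, X.IsSymm →
        g (R * Sig * Rᵀ) (R * X * Rᵀ) (R * X * Rᵀ) = g Sig X X) :
    ∃ b : (Fin n → ℝ) → M n →ₗ[ℝ] M n →ₗ[ℝ] ℝ, Good b ∧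
      ∀ d, PosVec d → ∀ X, X.IsSymm → g (diagonal d) X X = b d X X := by
  classical
  let S : M n → M n := fun X => (1/2 : ℝ) • (X + Xᵀ)
  have hS : ∀ X, (S X).IsSymm := by
    intro X; simp [S, Matrix.IsSymm, add_comm]
  have hSadd : ∀ X Y, S (X + Y) = S X + S Y := by
    intro X Y; simp only [S, transpose_add]; module
  have hSsmul : ∀ (c : ℝ) X, S (c • X) = c • S X := by
    intro c X; simp only [S, transpose_smul]; module
  have hSs : ∀ X : M n, X.IsSymm → S X = X := by
    intro X h; simp only [S, h.eq]; module
  have hSt : ∀ X, S Xᵀ = S X := by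
    intro X; simp [S, add_comm]
  have hSR : ∀ R X, S (R * X * Rᵀ) = R * S X * Rᵀ := by
    intro R X
    simp only [S, transpose_mul, transpose_transpose, Matrix.mul_smul, Matrix.smul_mul,
      Matrix.mul_add, Matrix.add_mul, Matrix.mul_assoc]
  have hpd : ∀ d : Fin n → ℝ, PosVec d → (diagonal d).PosDef := by
    intro d hd; exact Matrix.PosDef.diagonal hd
  have key : ∀ d : Fin n → ℝ, ∃ b : M n →ₗ[ℝ] M n →ₗ[ℝ] ℝ, PosVec d → 
      ∀ X Y, b X Y = g (diagonal d) (S X) (S Y) := by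
    intro d
    by_cases hd : PosVec d
    · have h := hpd d hd
      refine ⟨LinearMap.mk₂ ℝ (fun X Y => g (diagonal d) (S X) (S Y)) ?_ ?_ ?_ ?_, fun _ X Y => rfl⟩
      · intro X Y Z; rw [hSadd, hgadd _ h _ _ _ (hS _) (hS _) (hS _)]
      · intro c X Y; rw [hSsmul, hgsmul _ h _ _ _ (hS _) (hS _), smul_eq_mul]
      · intro X Y Z
        rw [hSadd, hgsym _ h _ _ (hS _) ((hS _).add (hS _)),
          hgadd _ h _ _ _ (hS _) (hS _) (hS _), hgsym _ h _ _ (hS _) (hS X),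
          hgsym _ h _ _ (hS _) (hS X)]
      · intro c X Y
        rw [hSsmul, hgsym _ h _ _ (hS _) ((hS _).smul c), hgsmul _ h _ _ _ (hS _) (hS _),
          hgsym _ h _ _ (hS _) (hS X), smul_eq_mul]
    · exact ⟨0, fun h => absurd h hd⟩
  choose b hb using key
  have bsymm : ∀ d, PosVec d → ∀ X Y, b d X Y = b d Y X := by
    intro d hd X Y
    rw [hb d hd, hb d hd, hgsym _ (hpd d hd) _ _ (hS _) (hS _)]
  have binv : ∀ d d', PosVec d → PosVec d' → ∀ R : M n, R * Rᵀ = 1 →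
      R * diagonal d * Rᵀ = diagonal d' → ∀ X Y,
      b d' (R * X * Rᵀ) (R * Y * Rᵀ) = b d X Y := by
    intro d d' hd hd' R hR hRd X Y
    have q : ∀ X, b d' (R * X * Rᵀ) (R * X * Rᵀ) = b d X X := by
      intro X
      rw [hb d' hd', hb d hd, hSR, ← hRd, hinv R hR _ (hpd d hd) _ (hS _)]
    have h1 := q X
    have h2 := q Y
    have h3 := q (X + Y)
    simp only [Matrix.mul_add, Matrix.add_mul, map_add, LinearMap.add_apply] at h3
    have h4 := bsymm d hd X Y
    have h5 := bsymm d' hd' (R * X * Rᵀ) (R * Y * Rᵀ)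
    linarith
  refine ⟨b, ⟨bsymm, ?_, ?_, ?_, ?_⟩, ?_⟩
  · intro d hd X Y; rw [hb d hd, hb d hd, hSt]
  · intro d hd X hX h0; rw [hb d hd, hSs X hX]; exact hgpos _ (hpd d hd) X hX h0
  · intro d hd s X Y
    have hs : ∀ Z : M n, s.permMatrix ℝ * Z * (s.permMatrix ℝ)ᵀ = Z.submatrix s s := by
      intro Z
      ext i j
      simp [Matrix.mul_apply, Equiv.Perm.permMatrix, PEquiv.toMatrix_apply, Equiv.symm_apply_eq]
    have := binv d (d ∘ s) hd (fun i => hd _) (s.permMatrix ℝ) ?_ ?_ X Y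
    · rwa [hs, hs] at this
    · have := hs 1
      rw [Matrix.mul_one] at this
      rw [this]; simp [Matrix.submatrix_one_equiv]
    · rw [hs]; exact Matrix.submatrix_diagonal_equiv d s
  · intro d hd R hR hRd X Y
    exact binv d d hd hd R hR (by rw [hRd, Matrix.mul_assoc, hR, Matrix.mul_one]) X Y
  · intro d hd X hX; rw [hb d hd, hSs X hX]

variable {n : ℕ} {b : (Fin n → ℝ) → M n →ₗ[ℝ] M n →ₗ[ℝ] ℝ}

lemma e_sub (s : Equiv.Perm (Fin n)) (i j : Fin n) :
    (e (s i) (s j)).submatrix s s = e i j := by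
  ext k l; simp [e, Matrix.single_apply]

lemma permE (H : Good b) {d} (hd : PosVec d) (s : Equiv.Perm (Fin n)) (i j k l : Fin n) :
    b (d ∘ s) (e i j) (e k l) = b d (e (s i) (s j)) (e (s k) (s l)) := by
  rw [← H.perm d hd s, e_sub, e_sub]

lemma e_tr (i j : Fin n) : (e i j)ᵀ = e j i := by simp [e]

lemma sgn (H : Good b) {d} (hd : PosVec d) (s : Fin n → ℝ) (hs : ∀ i, s i * s i = 1) (X Y : M n) :
    b d (diagonal s * X * diagonal s) (diagonal s * Y * diagonal s) = b d X Y := by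
  have := H.rot d hd (diagonal s) (by simp [hs]) (by simp [mul_comm]) X Y
  simpa using this

lemma off (H : Good b) {d} (hd : PosVec d) {i j : Fin n} (hij : i ≠ j) (Y : M n) :
    b d (e i j) Y = (Y i j + Y j i) * b d (e i j) (e i j) := by
  let f : Fin n → Fin n → ℝ := fun i k => if k = i then -1 else 1
  let F : Fin n → M n → M n := fun i X => diagonal (f i) * X * diagonal (f i)
  have hF : ∀ k X Y, b d (F k X) (F k Y) = b d X Y := by
    intro k X Y
    exact sgn H hd (f k) (by intro i; by_cases h : i = k <;> simp [f, h]) X Y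
  have hFe1 : F i (e i j) = - e i j := by
    ext k l; simp only [F, f, e, Matrix.mul_diagonal, Matrix.diagonal_mul, Matrix.single_apply,
      Matrix.neg_apply]; grind
  have hFe2 : F j (e i j) = - e i j := by
    ext k l; simp only [F, f, e, Matrix.mul_diagonal, Matrix.diagonal_mul, Matrix.single_apply,
      Matrix.neg_apply]; grind
  have hsum : Y - F i Y - F j Y + F j (F i Y) = (4 * Y i j) • e i j + (4 * Y j i) • e j i := by
    ext k l; simp only [F, f, e, Matrix.mul_diagonal, Matrix.diagonal_mul, Matrix.single_apply,
      Matrix.add_apply, Matrix.sub_apply, Matrix.smul_apply, smul_eq_mul]; grind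
  have h1 := hF i (e i j) Y
  have h2 := hF j (e i j) Y
  have h3 := hF j (e i j) (F i Y)
  have h4 := congrArg (b d (e i j)) hsum
  rw [hFe1] at h1
  rw [hFe2] at h2 h3
  have h5 : b d (e i j) (e j i) = b d (e i j) (e i j) := by
    rw [H.symm d hd, ← e_tr, H.tr d hd]
  simp only [map_add, map_sub, map_smul, map_neg, LinearMap.neg_apply, smul_eq_mul, h5] at *
  linarith

lemma mat_sum (X : M n) : X = ∑ i, ∑ j, X i j • e i j := by
  conv_lhs => rw [matrix_eq_sum_single X]
  simp [e, Matrix.smul_single]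

lemma diag_sum (x : Fin n → ℝ) : diagonal x = ∑ i, x i • e i i := by
  ext k l
  simp only [Matrix.sum_apply, e, Matrix.single_apply, Matrix.diagonal_apply, Matrix.smul_apply,
    smul_eq_mul]
  rw [Finset.sum_eq_single k]
  · simp
  · intro c _ hc; simp [hc]
  · simp

lemma diagE (H : Good b) {d} (hd : PosVec d) (i : Fin n) (X : M n) :
    b d (e i i) X = ∑ k, X k k * b d (e i i) (e k k) := by
  conv_lhs => rw [mat_sum X]
  simp only [map_sum, map_smul, smul_eq_mul]
  refine Finset.sum_congr rfl fun k _ => ?_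
  refine Finset.sum_eq_single k ?_ (by simp)
  intro l _ hl
  rw [H.symm d hd, off H hd (Ne.symm hl)]
  have : (e i i : M n) k l + e i i l k = 0 := by
    simp only [e, Matrix.single_apply]; grind
  simp [this]

lemma a_pos (H : Good b) {d} (hd : PosVec d) {i j : Fin n} (hij : i ≠ j) :
    0 < b d (e i j) (e i j) := by
  have h := H.pos d hd (e i j + e j i) (by
    simp [Matrix.IsSymm, e_tr, add_comm]) (by
    intro h
    have := congrFun (congrFun h i) j
    simp [e, Matrix.single_apply, hij] at this)
  have h5 : ∀ Y, b d (e j i) Y = b d (e i j) Y := by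
    intro Y; rw [← e_tr, H.tr d hd]
  have h6 := H.symm d hd (e i j) (e j i)
  simp only [map_add, LinearMap.add_apply, h5] at h h6
  linarith

lemma compat (H : Good b) {d} (hd : PosVec d) {i j : Fin n} (hij : i ≠ j) (hdij : d i = d j) :
    b d (e i i) (e i i) = 2 * b d (e i j) (e i j) + b d (e i i) (e j j) := by
  obtain ⟨c, hc⟩ : ∃ c : ℝ, c * c = 1/2 := ⟨√(1/2), Real.mul_self_sqrt (by norm_num)⟩
  let R : M n := 1 + (c-1) • e i i + (-c-1) • e j j + c • e i j + c • e j i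
  have hRt : Rᵀ = R := by
    simp only [R, transpose_add, transpose_smul, e_tr, transpose_one]; abel
  have ee : ∀ i j k : Fin n, e i j * e j k = e i k := by intros; simp [e]
  have e0 : ∀ {i j k l : Fin n}, j ≠ k → e i j * e k l = (0 : M n) := by
    intro i j k l h; simp [e, h]
  have hRR : R * R = 1 := by
    simp only [R, Matrix.mul_add, Matrix.add_mul, Matrix.mul_one, Matrix.one_mul, Matrix.mul_smul,
      Matrix.smul_mul, ee, e0 hij, e0 hij.symm, smul_zero, add_zero, zero_add]
    have : c^2 = 1/2 := by rw [sq, hc]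
    match_scalars <;> first | ring1 | linear_combination 2 * this | linear_combination -2 * this
  have hRD : R * diagonal d = diagonal d * R := by
    ext k l
    simp only [R, e, Matrix.mul_diagonal, Matrix.diagonal_mul, Matrix.single_apply,
      Matrix.add_apply, Matrix.smul_apply, smul_eq_mul, Matrix.one_apply]
    grind
  have hRX : R * (e i i - e j j) * Rᵀ = e i j + e j i := by
    rw [hRt]
    simp only [R, Matrix.mul_add, Matrix.add_mul, Matrix.mul_sub, Matrix.sub_mul, Matrix.mul_one, Matrix.one_mul, Matrix.mul_smul,
      Matrix.smul_mul, ee, e0 hij, e0 hij.symm, smul_zero, add_zero, zero_add, sub_zero, zero_sub, smul_neg, smul_add, smul_sub, neg_zero]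
    have : c^2 = 1/2 := by rw [sq, hc]
    match_scalars <;> first | ring1 | linear_combination 2 * this | linear_combination -2 * this
  have h := H.rot d hd R (by rw [hRt, hRR]) hRD (e i i - e j j) (e i i - e j j)
  rw [hRX] at h
  have h5 : ∀ Y, b d (e j i) Y = b d (e i j) Y := by
    intro Y; rw [← e_tr, H.tr d hd]
  have h6 := H.symm d hd (e i j) (e j i)
  have h7 := H.symm d hd (e i i) (e j j)
  have h8 : d ∘ Equiv.swap i j = d := by
    ext k; simp only [Function.comp, Equiv.swap_apply_def]; grind
  have h9 := permE H hd (Equiv.swap i j) i i i i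
  rw [h8] at h9
  simp only [Equiv.swap_apply_left] at h9
  simp only [map_add, map_sub, LinearMap.add_apply, LinearMap.sub_apply, h5] at h h6
  linarith

lemma perm2_0 (hn : 2 ≤ n) {i j : Fin n} (hij : i ≠ j) : perm2 hn i j ⟨0, by omega⟩ = i := by
  have h : (⟨0, by omega⟩ : Fin n) ≠ ⟨1, by omega⟩ := by simp
  have h' : (⟨0, by omega⟩ : Fin n) ≠ Equiv.swap ⟨0, by omega⟩ i j := by
    simp only [Equiv.swap_apply_def]; grind
  rw [perm2, Equiv.Perm.mul_apply, Equiv.swap_apply_of_ne_of_ne h h', Equiv.swap_apply_left]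

lemma perm2_1 (hn : 2 ≤ n) (i j : Fin n) : perm2 hn i j ⟨1, by omega⟩ = j := by
  simp [perm2]

end ONInv

open ONInv in
/-- Characterization of `O(n)`-invariant metrics on SPD matrices (necessity).
Any `O(n)`-invariant family of inner products on `Sym(n)` indexed by `SPD(n)` is given at
positive diagonal matrices by three functions `γ, α, β` satisfying the compatibility,
positivity and symmetry conditions. -/
theorem o_n_invariant_metric_characterization (n : ℕ) (hn : 2 ≤ n)
    (g : Matrix (Fin n) (Fin n) ℝ → Matrix (Fin n) (Fin n) ℝ → Matrix (Fin n) (Fin n) ℝ → ℝ)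
    (hgsym : ∀ Sig : Matrix (Fin n) (Fin n) ℝ, Sig.PosDef →
      ∀ X Y, X.IsSymm → Y.IsSymm → g Sig X Y = g Sig Y X)
    (hgadd : ∀ Sig : Matrix (Fin n) (Fin n) ℝ, Sig.PosDef →
      ∀ X Y Z, X.IsSymm → Y.IsSymm → Z.IsSymm → g Sig (X + Y) Z = g Sig X Z + g Sig Y Z)
    (hgsmul : ∀ Sig : Matrix (Fin n) (Fin n) ℝ, Sig.PosDef →
      ∀ (c : ℝ) (X Y : Matrix (Fin n) (Fin n) ℝ), X.IsSymm → Y.IsSymm →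
        g Sig (c • X) Y = c * g Sig X Y)
    (hgpos : ∀ Sig : Matrix (Fin n) (Fin n) ℝ, Sig.PosDef →
      ∀ X, X.IsSymm → X ≠ 0 → 0 < g Sig X X)
    (hinv : ∀ R : Matrix (Fin n) (Fin n) ℝ, R * Rᵀ = 1 →
      ∀ Sig : Matrix (Fin n) (Fin n) ℝ, Sig.PosDef → ∀ X, X.IsSymm →
        g (R * Sig * Rᵀ) (R * X * Rᵀ) (R * X * Rᵀ) = g Sig X X) :
    ∃ γ α β : (Fin n → ℝ) → ℝ,
      (∀ d, PosVec d → 0 < γ d) ∧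
      (∀ d, PosVec d → 0 < α d) ∧
      (∀ d : Fin n → ℝ, PosVec d → ∀ X : Matrix (Fin n) (Fin n) ℝ, X.IsSymm →
        g (Matrix.diagonal d) X X = gD hn γ α β d X X) ∧
      CompatCond hn γ α β ∧ PositivityCond hn γ β ∧
      Sym1n hn γ ∧ Sym2n hn α ∧ Sym2n hn β := by
  obtain ⟨b, H, hg⟩ := exists_good n g hgsym hgadd hgsmul hgpos hinv
  let z : Fin n := ⟨0, by omega⟩
  let o : Fin n := ⟨1, by omega⟩
  have hzo : z ≠ o := by simp [z, o]
  let γ : (Fin n → ℝ) → ℝ := fun d => b d (e z z) (e z z)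
  let α : (Fin n → ℝ) → ℝ := fun d => 2 * b d (e z o) (e z o)
  let β : (Fin n → ℝ) → ℝ := fun d => b d (e z z) (e o o)
  have hγ : ∀ d, PosVec d → ∀ i, γ (reord1 hn d i) = b d (e i i) (e i i) := by
    intro d hd i
    simp only [γ, reord1]
    rw [permE H hd]; simp [z]
  have hα : ∀ d, PosVec d → ∀ i j, i ≠ j → α (reord2 hn d i j) = 2 * b d (e i j) (e i j) := by
    intro d hd i j hij
    simp only [α, reord2]
    rw [permE H hd, perm2_0 hn hij, perm2_1]
  have hβ : ∀ d, PosVec d → ∀ i j, i ≠ j → β (reord2 hn d i j) = b d (e i i) (e j j) := by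
    intro d hd i j hij
    simp only [β, reord2]
    rw [permE H hd, perm2_0 hn hij, perm2_1]
  have hji : ∀ d, PosVec d → ∀ i j : Fin n, b d (e j i) (e j i) = b d (e i j) (e i j) := by
    intro d hd i j
    rw [← e_tr i j, H.tr d hd, H.symm d hd, H.tr d hd]
  have hSm : ∀ d, PosVec d → ∀ i j, Smat hn γ β d i j = b d (e i i) (e j j) := by
    intro d hd i j
    by_cases hij : i = j
    · subst hij; simp [Smat, hγ d hd]
    · simp [Smat, hij, hβ d hd i j hij]
  refine ⟨γ, α, β, ?_, ?_, ?_, ?_, ?_, ?_, ?_, ?_⟩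
  · intro d hd
    refine H.pos d hd _ (by simp [Matrix.IsSymm, e_tr]) ?_
    intro h
    have := congrFun (congrFun h z) z
    simp [e] at this
  · intro d hd
    have := a_pos H hd hzo
    simp only [α]; linarith
  · intro d hd X hX
    rw [hg d hd X hX]
    have h1 : b d X X = ∑ i, ∑ j, X i j * b d (e i j) X := by
      conv_lhs => rw [show b d X X = b d (∑ i, ∑ j, X i j • e i j) X by rw [← mat_sum X]]
      simp only [map_sum, map_smul, LinearMap.sum_apply, LinearMap.smul_apply, smul_eq_mul]
    have h2 : ∀ i, ∑ j, X i j * b d (e i j) X = X i i * b d (e i i) X +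
        ∑ j, if i = j then 0 else α (reord2 hn d i j) * X i j * X i j := by
      intro i
      rw [← Finset.add_sum_erase _ _ (Finset.mem_univ i),
        ← Finset.add_sum_erase (a := i) (f := fun j => if i = j then 0 else _) _ (Finset.mem_univ i)]
      simp only [if_true, zero_add]
      congr 1
      refine Finset.sum_congr rfl fun j hj => ?_
      have hij : i ≠ j := (Finset.ne_of_mem_erase hj).symm
      rw [if_neg hij, hα d hd i j hij, off H hd hij X, hX.apply i j]
      ring
    have h3 : ∀ i, X i i * b d (e i i) X = γ (reord1 hn d i) * X i i * X i i +
        ∑ j, if i = j then 0 else β (reord2 hn d i j) * X i i * X j j := by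
      intro i
      rw [diagE H hd, ← Finset.add_sum_erase _ _ (Finset.mem_univ i),
        ← Finset.add_sum_erase (a := i) (f := fun j => if i = j then 0 else _) _ (Finset.mem_univ i),
        hγ d hd]
      simp only [if_true, zero_add]
      rw [mul_add, Finset.mul_sum]
      congr 1
      · ring
      refine Finset.sum_congr rfl fun j hj => ?_
      have hij : i ≠ j := (Finset.ne_of_mem_erase hj).symm
      rw [if_neg hij, hβ d hd i j hij]
      ring
    rw [h1]
    simp only [h2, h3, Finset.sum_add_distrib, gD]
    ring
  · intro d hd h
    exact compat H hd hzo h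
  · intro d hd
    refine Matrix.PosDef.of_dotProduct_mulVec_pos ?_ ?_
    · ext i j
      simp only [Matrix.conjTranspose_apply, hSm d hd, star_trivial]
      exact H.symm d hd _ _
    · intro x hx
      have h := H.pos d hd (diagonal x) (by simp [Matrix.IsSymm]) (by
        intro h; exact hx (by simpa using h))
      have h2 : b d (diagonal x) (diagonal x) = ∑ i, x i * ∑ j, x j * b d (e i i) (e j j) := by
        rw [diag_sum]
        simp only [map_sum, map_smul, LinearMap.sum_apply, LinearMap.smul_apply, smul_eq_mul]
        simp only [Finset.mul_sum]
        rw [Finset.sum_comm]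
        refine Finset.sum_congr rfl fun i _ => Finset.sum_congr rfl fun j _ => ?_
        ring
      rw [h2] at h
      simp only [dotProduct, mulVec, hSm d hd, star_trivial]
      simpa [mul_comm] using h
  · intro σ h d hd
    simp only [γ]
    rw [permE H hd]
    simp only [z, h]
  · intro σ h d hd
    simp only [α]
    rw [permE H hd]
    rcases h with ⟨h0, h1⟩ | ⟨h0, h1⟩
    · simp only [z, o, h0, h1]
    · simp only [z, o, h0, h1]
      rw [hji d hd]
  · intro σ h d hd
    simp only [β]
    rw [permE H hd]
    rcases h with ⟨h0, h1⟩ | ⟨h0, h1⟩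
    · simp only [z, o, h0, h1]
    · simp only [z, o, h0, h1]
      rw [H.symm d hd]
end

section
/- Let γ, α : (0,∞)ⁿ → (0,∞) and β : (0,∞)ⁿ → ℝ be functions such that: (Compatibility) γ = α + β on the set {d ∈ (0,∞)ⁿ : d₁ = d₂}; (Positivity) for all d ∈ (0,∞)ⁿ, the symmetric matrix S(d) with S_{ii}(d) = γ(d_i, d_{k≠i}) and S_{ij}(d) = β(d_i, d_j, d_{k≠i,j}) for i ≠ j is positive definite; (Symmetry) γ is (1,n−1)-symmetric and α, β are (2,n−2)-symmetric. For a positive diagonal D = diag(d₁,…,d_n) define g_D(X,X) = Σ_i γ(d_i, d_{k≠i}) X_{ii}² + Σ_{i≠j} α(d_i, d_j, d_{k≠i,j}) X_{ij}² + Σ_{i≠j} β(d_i, d_j, d_{k≠i,j}) X_{ii} X_{jj}. Then setting g_Σ(X,X) := g_D(PᵀXP, PᵀXP) for any eigenvalue decomposition Σ = PDPᵀ with P ∈ O(n) and D positive diagonal is independent of the chosen decomposition, and this defines an O(n)-invariant family of positive definite inner products on Sym(n) indexed by Σ ∈ SPD(n). -/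
open Matrix Finset

lemma aux_perm_exists {n : ℕ} (d δ : Fin n → ℝ)
    (h : (∏ i, (Polynomial.X - Polynomial.C (d i))) = ∏ i, (Polynomial.X - Polynomial.C (δ i))) :
    ∃ σ : Equiv.Perm (Fin n), δ = d ∘ σ := by
  have hm : (Finset.univ.val.map d) = (Finset.univ.val.map δ) := by
    have h1 := Polynomial.roots_multiset_prod_X_sub_C (Finset.univ.val.map d)
    have h2 := Polynomial.roots_multiset_prod_X_sub_C (Finset.univ.val.map δ)
    rw [Multiset.map_map] at h1 h2
    rw [← h1, ← h2]
    exact congrArg Polynomial.roots h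
  have hc : ∀ c : ℝ, Nonempty ({a // δ a = c} ≃ {a // d a = c}) := by
    intro c
    have := congrArg (Multiset.count c) hm
    rw [Multiset.count_map, Multiset.count_map] at this
    refine Fintype.card_eq.mp ?_
    rw [Fintype.card_subtype, Fintype.card_subtype]
    simp only [eq_comm (b := c)]
    exact this.symm
  refine ⟨Equiv.ofFiberEquiv (fun c => (hc c).some), ?_⟩
  funext a
  exact (Equiv.ofFiberEquiv_map (fun c => (hc c).some) a).symm

lemma aux_fix {n : ℕ} (x : Fin n) (u v : Fin n → ℝ) (σ : Equiv.Perm (Fin n))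
    (h : u = v ∘ σ) (hx : u x = v x) :
    u = v ∘ (Equiv.swap x (σ x) * σ : Equiv.Perm (Fin n)) := by
  have h2 : v (σ x) = v x := by rw [← hx, h]; rfl
  funext a
  rw [h]
  simp only [Function.comp, Equiv.Perm.mul_apply, Equiv.swap_apply_def]
  split_ifs with h3 h4
  · rw [h3, h2]
  · rw [h4, h2]
  · rfl

lemma aux_sym1 {n : ℕ} (hn : 2 ≤ n) (f : (Fin n → ℝ) → ℝ) (hf : Sym1n hn f)
    (u v : Fin n → ℝ) (hv : PosVec v) (σ : Equiv.Perm (Fin n)) (h : u = v ∘ σ)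
    (h0 : u ⟨0, by omega⟩ = v ⟨0, by omega⟩) : f u = f v := by
  have h1 := aux_fix _ u v σ h h0
  rw [h1]
  exact hf _ (by simp) v hv

lemma aux_sym2 {n : ℕ} (hn : 2 ≤ n) (f : (Fin n → ℝ) → ℝ) (hf : Sym2n hn f)
    (u v : Fin n → ℝ) (hv : PosVec v) (σ : Equiv.Perm (Fin n)) (h : u = v ∘ σ)
    (h0 : u ⟨0, by omega⟩ = v ⟨0, by omega⟩) (h1 : u ⟨1, by omega⟩ = v ⟨1, by omega⟩) :
    f u = f v := by
  have h2 := aux_fix _ u v σ h h0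
  set τ := Equiv.swap ⟨0, by omega⟩ (σ ⟨0, by omega⟩) * σ with hτ
  have ht0 : τ ⟨0, by omega⟩ = ⟨0, by omega⟩ := by simp [hτ]
  have h3 := aux_fix _ u v τ h2 h1
  rw [h3]
  refine hf _ (Or.inl ⟨?_, by simp⟩) v hv
  rw [Equiv.Perm.mul_apply, ht0]
  apply Equiv.swap_apply_of_ne_of_ne
  · simp
  · intro h4
    rw [← ht0] at h4
    have := τ.injective h4
    simp at this

lemma aux_perm2_zero {n : ℕ} (hn : 2 ≤ n) (i j : Fin n) (hij : i ≠ j) :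
    perm2 hn i j ⟨0, by omega⟩ = i := by
  unfold perm2
  have key : ∀ a b c : Fin n, a ≠ b → a ≠ c → Equiv.swap b c a = a :=
    fun a b c h1 h2 => Equiv.swap_apply_of_ne_of_ne h1 h2
  rw [Equiv.Perm.mul_apply, key _ ⟨1, by omega⟩, Equiv.swap_apply_left]
  · simp
  · intro h
    rw [eq_comm, Equiv.swap_apply_eq_iff, Equiv.swap_apply_left] at h
    exact hij h.symm

lemma aux_perm2_one {n : ℕ} (hn : 2 ≤ n) (i j : Fin n) :
    perm2 hn i j ⟨1, by omega⟩ = j := by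
  unfold perm2
  simp [Equiv.Perm.mul_apply]

lemma aux_r1 {n : ℕ} (hn : 2 ≤ n) (f : (Fin n → ℝ) → ℝ) (hf : Sym1n hn f)
    (d δ : Fin n → ℝ) (hd : PosVec d) (σ : Equiv.Perm (Fin n)) (h : δ = d ∘ σ)
    (i k : Fin n) (hik : δ i = d k) : f (reord1 hn δ i) = f (reord1 hn d k) := by
  refine aux_sym1 hn f hf _ _ (fun a => hd _)
    ((Equiv.swap ⟨0, by omega⟩ k)⁻¹ * σ * Equiv.swap ⟨0, by omega⟩ i) ?_ ?_
  · funext a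
    simp [reord1, h]
  · simp [reord1, hik]

lemma aux_r2 {n : ℕ} (hn : 2 ≤ n) (f : (Fin n → ℝ) → ℝ) (hf : Sym2n hn f)
    (d δ : Fin n → ℝ) (hd : PosVec d) (σ : Equiv.Perm (Fin n)) (h : δ = d ∘ σ)
    (i j k l : Fin n) (hij : i ≠ j) (hkl : k ≠ l) (hik : δ i = d k) (hjl : δ j = d l) :
    f (reord2 hn δ i j) = f (reord2 hn d k l) := by
  refine aux_sym2 hn f hf _ _ (fun a => hd _)
    ((perm2 hn k l)⁻¹ * σ * perm2 hn i j) ?_ ?_ ?_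
  · funext a
    simp [reord2, h]
  · simp [reord2, aux_perm2_zero, hij, hkl, hik]
  · simp [reord2, aux_perm2_one, hjl]

lemma aux_compat {n : ℕ} (hn : 2 ≤ n) (γ α β : (Fin n → ℝ) → ℝ)
    (hcompat : CompatCond hn γ α β) (hγsym : Sym1n hn γ)
    (d : Fin n → ℝ) (hd : PosVec d) (i j : Fin n) (hij : i ≠ j) (h : d i = d j) :
    γ (reord1 hn d i) = α (reord2 hn d i j) + β (reord2 hn d i j) := by
  rw [← hcompat (reord2 hn d i j) (fun a => hd _)
    (by simp [reord2, aux_perm2_zero, aux_perm2_one, hij, h])]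
  refine aux_sym1 hn γ hγsym _ _ (fun a => hd _)
    ((perm2 hn i j)⁻¹ * Equiv.swap ⟨0, by omega⟩ i) ?_ ?_
  · funext a
    simp [reord2, reord1]
  · simp [reord2, reord1, aux_perm2_zero, hij]

open Classical in
noncomputable def auxA {n : ℕ} (hn : 2 ≤ n) (γ α : (Fin n → ℝ) → ℝ) (d : Fin n → ℝ)
    (i j : Fin n) : ℝ :=
  if i = j then
    if h : ∃ l, i ≠ l ∧ d i = d l then α (reord2 hn d i h.choose) else γ (reord1 hn d i)
  else α (reord2 hn d i j)

noncomputable def auxB {n : ℕ} (hn : 2 ≤ n) (γ α β : (Fin n → ℝ) → ℝ) (d : Fin n → ℝ)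
    (i j : Fin n) : ℝ :=
  if i = j then γ (reord1 hn d i) - auxA hn γ α d i i else β (reord2 hn d i j)

lemma auxA_eq {n : ℕ} (hn : 2 ≤ n) (γ α : (Fin n → ℝ) → ℝ) (hαsym : Sym2n hn α)
    (d : Fin n → ℝ) (hd : PosVec d) (i l : Fin n) (hil : i ≠ l) (h : d i = d l) :
    auxA hn γ α d i i = α (reord2 hn d i l) := by
  have hex : ∃ l, i ≠ l ∧ d i = d l := ⟨l, hil, h⟩
  unfold auxA
  rw [if_pos rfl, dif_pos hex]
  exact aux_r2 hn α hαsym d d hd 1 rfl _ _ _ _ hex.choose_spec.1 hil rfl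
    (hex.choose_spec.2.symm.trans h)

lemma auxA_diag {n : ℕ} (hn : 2 ≤ n) (γ α : (Fin n → ℝ) → ℝ)
    (hγsym : Sym1n hn γ) (hαsym : Sym2n hn α)
    (d δ : Fin n → ℝ) (hd : PosVec d) (hδ : PosVec δ) (σ : Equiv.Perm (Fin n)) (h : δ = d ∘ σ)
    (i k : Fin n) (hik : δ i = d k) : auxA hn γ α δ i i = auxA hn γ α d k k := by
  -- both indices have a second equal entry, or neither
  have key : (∃ l, i ≠ l ∧ δ i = δ l) ↔ (∃ l, k ≠ l ∧ d k = d l) := by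
    have h1 := aux_fix i (d ∘ Equiv.swap i k) δ (σ⁻¹ * Equiv.swap i k)
      (by funext a; simp [h]) (by simp [hik])
    set τ := Equiv.swap i ((σ⁻¹ * Equiv.swap i k) i) * (σ⁻¹ * Equiv.swap i k) with hτ
    have hti : τ i = i := by simp [hτ]
    have h2 : ∀ a, d a = δ (τ (Equiv.swap i k a)) := by
      intro a
      have := congrFun h1 (Equiv.swap i k a)
      simpa using this
    set ρ : Equiv.Perm (Fin n) := τ * Equiv.swap i k with hρ
    have hρk : ρ k = i := by simp [hρ, hti]
    have h2 : ∀ a, d a = δ (ρ a) := h2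
    constructor
    · rintro ⟨l, hl, hl'⟩
      refine ⟨ρ⁻¹ l, ?_, ?_⟩
      · intro hk
        apply hl
        rw [← hρk, hk]; simp
      · rw [h2, h2, hρk]; simpa using hl'
    · rintro ⟨l, hl, hl'⟩
      refine ⟨ρ l, ?_, ?_⟩
      · intro hk
        rw [← hρk] at hk
        exact hl (ρ.injective hk)
      · rw [← h2, hik, hl']
  by_cases hx : ∃ l, k ≠ l ∧ d k = d l
  · obtain ⟨m, hm, hm'⟩ := key.mpr hx
    obtain ⟨l, hl, hl'⟩ := hx
    rw [auxA_eq hn γ α hαsym δ hδ i m hm hm', auxA_eq hn γ α hαsym d hd k l hl hl']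
    exact aux_r2 hn α hαsym d δ hd σ h _ _ _ _ hm hl hik (by rw [← hm', hik, hl'])
  · unfold auxA
    rw [if_pos rfl, if_pos rfl, dif_neg hx, dif_neg (by rwa [key])]
    exact aux_r1 hn γ hγsym d δ hd σ h i k hik

lemma auxA_inv {n : ℕ} (hn : 2 ≤ n) (γ α : (Fin n → ℝ) → ℝ)
    (hγsym : Sym1n hn γ) (hαsym : Sym2n hn α)
    (d δ : Fin n → ℝ) (hd : PosVec d) (hδ : PosVec δ) (σ : Equiv.Perm (Fin n)) (h : δ = d ∘ σ)
    (i j k l : Fin n) (hik : δ i = d k) (hjl : δ j = d l) :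
    auxA hn γ α δ i j = auxA hn γ α d k l := by
  by_cases hij : i = j
  · subst hij
    rw [auxA_diag hn γ α hγsym hαsym d δ hd hδ σ h i k hik]
    by_cases hkl : k = l
    · rw [hkl]
    · rw [auxA_eq hn γ α hαsym d hd k l hkl (hik.symm.trans hjl), auxA, if_neg hkl]
  · by_cases hkl : k = l
    · subst hkl
      rw [← auxA_diag hn γ α hγsym hαsym d δ hd hδ σ h i k hik,
        auxA_eq hn γ α hαsym δ hδ i j hij (hik.trans hjl.symm), auxA, if_neg hij]
    · rw [auxA, auxA, if_neg hij, if_neg hkl]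
      exact aux_r2 hn α hαsym d δ hd σ h _ _ _ _ hij hkl hik hjl

lemma auxB_eq {n : ℕ} (hn : 2 ≤ n) (γ α β : (Fin n → ℝ) → ℝ)
    (hcompat : CompatCond hn γ α β) (hγsym : Sym1n hn γ) (hαsym : Sym2n hn α)
    (d : Fin n → ℝ) (hd : PosVec d) (i l : Fin n) (hil : i ≠ l) (h : d i = d l) :
    auxB hn γ α β d i i = β (reord2 hn d i l) := by
  rw [auxB, if_pos rfl, auxA_eq hn γ α hαsym d hd i l hil h,
    aux_compat hn γ α β hcompat hγsym d hd i l hil h]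
  ring

lemma auxB_inv {n : ℕ} (hn : 2 ≤ n) (γ α β : (Fin n → ℝ) → ℝ)
    (hcompat : CompatCond hn γ α β)
    (hγsym : Sym1n hn γ) (hαsym : Sym2n hn α) (hβsym : Sym2n hn β)
    (d δ : Fin n → ℝ) (hd : PosVec d) (hδ : PosVec δ) (σ : Equiv.Perm (Fin n)) (h : δ = d ∘ σ)
    (i j k l : Fin n) (hik : δ i = d k) (hjl : δ j = d l) :
    auxB hn γ α β δ i j = auxB hn γ α β d k l := by
  have hdiag : auxB hn γ α β δ i i = auxB hn γ α β d k k := by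
    rw [auxB, auxB, if_pos rfl, if_pos rfl, auxA_diag hn γ α hγsym hαsym d δ hd hδ σ h i k hik,
      aux_r1 hn γ hγsym d δ hd σ h i k hik]
  by_cases hij : i = j
  · subst hij
    rw [hdiag]
    by_cases hkl : k = l
    · rw [hkl]
    · rw [auxB_eq hn γ α β hcompat hγsym hαsym d hd k l hkl (hik.symm.trans hjl), auxB, if_neg hkl]
  · by_cases hkl : k = l
    · subst hkl
      rw [← hdiag,
        auxB_eq hn γ α β hcompat hγsym hαsym δ hδ i j hij (hik.trans hjl.symm), auxB, if_neg hij]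
    · rw [auxB, auxB, if_neg hij, if_neg hkl]
      exact aux_r2 hn β hβsym d δ hd σ h _ _ _ _ hij hkl hik hjl

lemma aux_gD {n : ℕ} (hn : 2 ≤ n) (γ α β : (Fin n → ℝ) → ℝ) (d : Fin n → ℝ)
    (X Y : Matrix (Fin n) (Fin n) ℝ) :
    gD hn γ α β d X Y = (∑ i, ∑ j, auxA hn γ α d i j * X i j * Y i j) +
      ∑ i, ∑ j, auxB hn γ α β d i j * X i i * Y j j := by
  unfold gD
  have h1 : ∀ i, γ (reord1 hn d i) * X i i * Y i i =
      ∑ j, if i = j then γ (reord1 hn d i) * X i i * Y i i else 0 := by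
    intro i; simp
  rw [Finset.sum_congr rfl fun i _ => h1 i]
  simp_rw [← Finset.sum_add_distrib]
  refine Finset.sum_congr rfl fun i _ => Finset.sum_congr rfl fun j _ => ?_
  by_cases hij : i = j
  · subst hij
    simp only [auxB, if_true]; ring
  · simp [auxB, auxA, hij]

/-- Hadamard product intertwines. -/
lemma aux_had {n : ℕ} (A A' U X : Matrix (Fin n) (Fin n) ℝ)
    (h : ∀ i j k l, U k i ≠ 0 → U l j ≠ 0 → A' i j = A k l) :
    (Matrix.of fun i j => A' i j * (Uᵀ * X * U) i j) =
      Uᵀ * (Matrix.of fun i j => A i j * X i j) * U := by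
  ext i j
  simp only [Matrix.of_apply, Matrix.mul_apply, Matrix.transpose_apply, Finset.sum_mul,
    Finset.mul_sum]
  refine Finset.sum_congr rfl fun l _ => Finset.sum_congr rfl fun k _ => ?_
  by_cases h1 : U k i = 0
  · simp [h1]
  by_cases h2 : U l j = 0
  · simp [h2]
  rw [h i j k l h1 h2]; ring

lemma aux_frob {n : ℕ} (M N : Matrix (Fin n) (Fin n) ℝ) :
    ∑ i, ∑ j, M i j * N i j = (M * Nᵀ).trace := by
  simp [Matrix.trace, Matrix.mul_apply]

lemma aux_first {n : ℕ} (A A' U X Y : Matrix (Fin n) (Fin n) ℝ) (hU : U * Uᵀ = 1)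
    (h : ∀ i j k l, U k i ≠ 0 → U l j ≠ 0 → A' i j = A k l) :
    ∑ i, ∑ j, A' i j * (Uᵀ * X * U) i j * (Uᵀ * Y * U) i j =
      ∑ i, ∑ j, A i j * X i j * Y i j := by
  have h1 := aux_frob (Matrix.of fun i j => A' i j * (Uᵀ * X * U) i j) (Uᵀ * Y * U)
  have h2 := aux_frob (Matrix.of fun i j => A i j * X i j) Y
  simp only [Matrix.of_apply] at h1 h2
  rw [h1, h2, aux_had A A' U X h]
  generalize (Matrix.of fun i j => A i j * X i j) = M
  have : Uᵀ * M * U * (Uᵀ * Y * U)ᵀ = Uᵀ * (M * (U * Uᵀ) * Yᵀ * U) := by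
    simp only [Matrix.transpose_mul, Matrix.transpose_transpose, Matrix.mul_assoc]
  rw [this, hU, Matrix.trace_mul_comm, Matrix.mul_one, Matrix.mul_assoc, hU, Matrix.mul_one]

lemma aux_diag {n : ℕ} (w w' : Fin n → ℝ) (U Y : Matrix (Fin n) (Fin n) ℝ) (hU : U * Uᵀ = 1)
    (h : ∀ j l, U l j ≠ 0 → w' j = w l) :
    ∑ j, w' j * (Uᵀ * Y * U) j j = ∑ j, w j * Y j j := by
  have h1 : Matrix.diagonal w * U = U * Matrix.diagonal w' := by
    ext l j
    rw [Matrix.diagonal_mul, Matrix.mul_diagonal]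
    by_cases h0 : U l j = 0
    · simp [h0]
    · rw [h j l h0]; ring
  have h2 : ∀ (v : Fin n → ℝ) (Z : Matrix (Fin n) (Fin n) ℝ),
      ∑ j, v j * Z j j = (Matrix.diagonal v * Z).trace := by
    intro v Z; simp [Matrix.trace, Matrix.diagonal_mul]
  rw [h2, h2, Matrix.trace_mul_comm]
  have : Uᵀ * Y * U * Matrix.diagonal w' = Uᵀ * (Y * Matrix.diagonal w * U) := by
    simp only [Matrix.mul_assoc, h1]
  rw [this, Matrix.trace_mul_comm, Matrix.mul_assoc, hU, Matrix.mul_one, Matrix.trace_mul_comm]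

lemma aux_second {n : ℕ} (B B' U X Y : Matrix (Fin n) (Fin n) ℝ) (hU : U * Uᵀ = 1)
    (h : ∀ i j k l, U k i ≠ 0 → U l j ≠ 0 → B' i j = B k l) :
    ∑ i, ∑ j, B' i j * (Uᵀ * X * U) i i * (Uᵀ * Y * U) j j =
      ∑ i, ∑ j, B i j * X i i * Y j j := by
  have e1 : ∀ (C Z W : Matrix (Fin n) (Fin n) ℝ), ∑ i, ∑ j, C i j * Z i i * W j j =
      ∑ i, (∑ j, C i j * W j j) * Z i i := by
    intro C Z W
    refine Finset.sum_congr rfl fun i _ => ?_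
    rw [Finset.sum_mul]
    exact Finset.sum_congr rfl fun j _ => by ring
  rw [e1, e1]
  refine aux_diag (fun i => ∑ j, B i j * Y j j) _ U X hU ?_
  intro i k hik
  exact aux_diag (B k) (B' i) U Y hU (fun j l hjl => h i j k l hik hjl)

lemma aux_well {n : ℕ} (hn : 2 ≤ n) (γ α β : (Fin n → ℝ) → ℝ)
    (hcompat : CompatCond hn γ α β)
    (hγsym : Sym1n hn γ) (hαsym : Sym2n hn α) (hβsym : Sym2n hn β)
    (P Q : Matrix (Fin n) (Fin n) ℝ) (d δ : Fin n → ℝ)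
    (hP : P * Pᵀ = 1) (hQ : Q * Qᵀ = 1) (hd : PosVec d) (hδ : PosVec δ)
    (h : P * Matrix.diagonal d * Pᵀ = Q * Matrix.diagonal δ * Qᵀ)
    (X Y : Matrix (Fin n) (Fin n) ℝ) :
    gD hn γ α β d (Pᵀ * X * P) (Pᵀ * Y * P) = gD hn γ α β δ (Qᵀ * X * Q) (Qᵀ * Y * Q) := by
  have hP' : Pᵀ * P = 1 := mul_eq_one_comm.mp hP
  have hQ' : Qᵀ * Q = 1 := mul_eq_one_comm.mp hQ
  obtain ⟨σ, hσ⟩ : ∃ σ : Equiv.Perm (Fin n), δ = d ∘ σ := by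
    apply aux_perm_exists
    rw [← Matrix.charpoly_diagonal, ← Matrix.charpoly_diagonal]
    have h1 : (P * Matrix.diagonal d * Pᵀ).charpoly = (Matrix.diagonal d).charpoly := by
      rw [Matrix.charpoly_mul_comm, ← Matrix.mul_assoc, hP', Matrix.one_mul]
    have h2 : (Q * Matrix.diagonal δ * Qᵀ).charpoly = (Matrix.diagonal δ).charpoly := by
      rw [Matrix.charpoly_mul_comm, ← Matrix.mul_assoc, hQ', Matrix.one_mul]
    rw [← h1, ← h2, h]
  set U := Pᵀ * Q with hUdef
  have hU : U * Uᵀ = 1 := by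
    rw [hUdef, Matrix.transpose_mul, Matrix.transpose_transpose, Matrix.mul_assoc,
      ← Matrix.mul_assoc Q, hQ, Matrix.one_mul, hP']
  have hPU : P * U = Q := by rw [hUdef, ← Matrix.mul_assoc, hP, Matrix.one_mul]
  have hcomm : Matrix.diagonal d * U = U * Matrix.diagonal δ := by
    have := congrArg (fun M => Pᵀ * M * Q) h
    have e1 : Pᵀ * (P * Matrix.diagonal d * Pᵀ) * Q = (Pᵀ * P) * Matrix.diagonal d * (Pᵀ * Q) := by
      simp only [Matrix.mul_assoc]
    have e2 : Pᵀ * (Q * Matrix.diagonal δ * Qᵀ) * Q = (Pᵀ * Q) * Matrix.diagonal δ * (Qᵀ * Q) := by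
      simp only [Matrix.mul_assoc]
    rw [e1, e2, hP', hQ', Matrix.one_mul, Matrix.mul_one] at this
    exact this
  have hent : ∀ i k, U k i ≠ 0 → δ i = d k := by
    intro i k hk
    have := congrFun (congrFun hcomm k) i
    rw [Matrix.diagonal_mul, Matrix.mul_diagonal, mul_comm] at this
    exact (mul_left_cancel₀ hk this).symm
  have hX : ∀ Z : Matrix (Fin n) (Fin n) ℝ, Qᵀ * Z * Q = Uᵀ * (Pᵀ * Z * P) * U := by
    intro Z
    rw [← hPU, Matrix.transpose_mul]
    simp only [Matrix.mul_assoc]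
  rw [aux_gD, aux_gD, hX X, hX Y]
  congr 1
  · exact (aux_first (auxA hn γ α d) (auxA hn γ α δ) U _ _ hU (fun i j k l hk hl =>
      auxA_inv hn γ α hγsym hαsym d δ hd hδ σ hσ i j k l (hent i k hk) (hent j l hl))).symm
  · exact (aux_second (auxB hn γ α β d) (auxB hn γ α β δ) U _ _ hU (fun i j k l hk hl =>
      auxB_inv hn γ α β hcompat hγsym hαsym hβsym d δ hd hδ σ hσ i j k l
        (hent i k hk) (hent j l hl))).symm

lemma aux_spec {n : ℕ} (S : Matrix (Fin n) (Fin n) ℝ) (hS : S.PosDef) :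
    ∃ (P : Matrix (Fin n) (Fin n) ℝ) (d : Fin n → ℝ), P * Pᵀ = 1 ∧ PosVec d ∧
      S = P * Matrix.diagonal d * Pᵀ := by
  refine ⟨hS.1.eigenvectorUnitary, hS.1.eigenvalues, ?_, fun i => hS.eigenvalues_pos i, ?_⟩
  · have := Unitary.coe_mul_star_self hS.1.eigenvectorUnitary
    rwa [Unitary.coe_star, Matrix.star_eq_conjTranspose, Matrix.conjTranspose_eq_transpose_of_trivial] at this
  · have := hS.1.spectral_theorem
    rw [Unitary.conjStarAlgAut_apply, Matrix.star_eq_conjTranspose,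
      Matrix.conjTranspose_eq_transpose_of_trivial] at this
    exact this

lemma aux_pos {n : ℕ} (hn : 2 ≤ n) (γ α β : (Fin n → ℝ) → ℝ)
    (hαpos : ∀ d, PosVec d → 0 < α d) (hposS : PositivityCond hn γ β)
    (d : Fin n → ℝ) (hd : PosVec d) (X : Matrix (Fin n) (Fin n) ℝ) (hX : X ≠ 0) :
    0 < gD hn γ α β d X X := by
  have e : gD hn γ α β d X X =
      (∑ i, ∑ j, if i = j then 0 else α (reord2 hn d i j) * X i j * X i j) +
      (star X.diag ⬝ᵥ (Smat hn γ β d *ᵥ X.diag)) := by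
    unfold gD
    have h1 : ∀ i, γ (reord1 hn d i) * X i i * X i i =
        ∑ j, if i = j then γ (reord1 hn d i) * X i i * X i i else 0 := by
      intro i; simp
    rw [Finset.sum_congr rfl fun i _ => h1 i]
    simp_rw [dotProduct, mulVec, dotProduct, Finset.mul_sum, ← Finset.sum_add_distrib]
    refine Finset.sum_congr rfl fun i _ => Finset.sum_congr rfl fun j _ => ?_
    by_cases hij : i = j
    · subst hij
      simp [Smat]; ring
    · simp [Smat, hij]; ring
  have hterm : ∀ i j, 0 ≤ (if i = j then 0 else α (reord2 hn d i j) * X i j * X i j) := by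
    intro i j
    split_ifs
    · exact le_rfl
    · rw [mul_assoc]
      exact mul_nonneg (hαpos _ (fun a => hd _)).le (mul_self_nonneg _)
  have hA : 0 ≤ ∑ i, ∑ j, if i = j then 0 else α (reord2 hn d i j) * X i j * X i j :=
    Finset.sum_nonneg fun i _ => Finset.sum_nonneg fun j _ => hterm i j
  rw [e]
  by_cases hdg : X.diag = 0
  · obtain ⟨i, j, hij⟩ : ∃ i j, X i j ≠ 0 := by
      by_contra hc
      push Not at hc
      exact hX (by ext i j; exact hc i j)
    have hne : i ≠ j := by
      rintro rfl
      exact hij (congrFun hdg i)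
    rw [hdg]
    simp only [star_zero, zero_dotProduct, add_zero]
    refine Finset.sum_pos' (fun i _ => Finset.sum_nonneg fun j _ => hterm i j) ⟨i, mem_univ _, ?_⟩
    refine Finset.sum_pos' (fun j _ => hterm i j) ⟨j, mem_univ _, ?_⟩
    rw [if_neg hne, mul_assoc]
    exact mul_pos (hαpos _ (fun a => hd _)) (mul_self_pos.mpr hij)
  · exact add_pos_of_nonneg_of_pos hA ((hposS d hd).dotProduct_mulVec_pos hdg)

lemma aux_symm {n : ℕ} (hn : 2 ≤ n) (γ α β : (Fin n → ℝ) → ℝ)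
    (hposS : PositivityCond hn γ β)
    (d : Fin n → ℝ) (hd : PosVec d) (X Y : Matrix (Fin n) (Fin n) ℝ) :
    gD hn γ α β d X Y = gD hn γ α β d Y X := by
  unfold gD
  congr 1
  · congr 1
    · exact Finset.sum_congr rfl fun i _ => by ring
    · refine Finset.sum_congr rfl fun i _ => Finset.sum_congr rfl fun j _ => ?_
      split_ifs
      · rfl
      · ring
  · rw [Finset.sum_comm]
    refine Finset.sum_congr rfl fun i _ => Finset.sum_congr rfl fun j _ => ?_
    by_cases hij : i = j
    · simp [hij]
    · have := (hposS d hd).1.apply i j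
      simp only [Smat, Matrix.of_apply, if_neg hij, if_neg (Ne.symm hij), star_trivial] at this
      rw [if_neg hij, if_neg (Ne.symm hij), this]; ring

lemma aux_add {n : ℕ} (hn : 2 ≤ n) (γ α β : (Fin n → ℝ) → ℝ)
    (d : Fin n → ℝ) (X Y Z : Matrix (Fin n) (Fin n) ℝ) :
    gD hn γ α β d (X + Y) Z = gD hn γ α β d X Z + gD hn γ α β d Y Z := by
  simp only [aux_gD, Matrix.add_apply, mul_add, add_mul, Finset.sum_add_distrib]
  ring

lemma aux_smul {n : ℕ} (hn : 2 ≤ n) (γ α β : (Fin n → ℝ) → ℝ)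
    (d : Fin n → ℝ) (c : ℝ) (X Y : Matrix (Fin n) (Fin n) ℝ) :
    gD hn γ α β d (c • X) Y = c * gD hn γ α β d X Y := by
  simp only [aux_gD, Matrix.smul_apply, smul_eq_mul, mul_add, Finset.mul_sum]
  congr 1 <;>
  exact Finset.sum_congr rfl fun i _ => Finset.sum_congr rfl fun j _ => by ring

/-- Characterization of `O(n)`-invariant metrics on SPD matrices (sufficiency).
Given `γ, α, β` satisfying the compatibility, positivity and symmetry conditions, the value
`g_Σ(X,Y) := g_D(PᵀXP, PᵀYP)` does not depend on the chosen eigenvalue decomposition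
`Σ = P D Pᵀ`, and this defines an `O(n)`-invariant family of positive definite inner products
on `Sym(n)` indexed by `Σ ∈ SPD(n)`. -/
theorem o_n_invariant_metric_construction (n : ℕ) (hn : 2 ≤ n)
    (γ α β : (Fin n → ℝ) → ℝ)
    (hγpos : ∀ d, PosVec d → 0 < γ d) (hαpos : ∀ d, PosVec d → 0 < α d)
    (hcompat : CompatCond hn γ α β) (hposS : PositivityCond hn γ β)
    (hγsym : Sym1n hn γ) (hαsym : Sym2n hn α) (hβsym : Sym2n hn β) :
    (∀ (P Q : Matrix (Fin n) (Fin n) ℝ) (d δ : Fin n → ℝ),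
      P * Pᵀ = 1 → Q * Qᵀ = 1 → PosVec d → PosVec δ →
      P * Matrix.diagonal d * Pᵀ = Q * Matrix.diagonal δ * Qᵀ →
      ∀ X Y : Matrix (Fin n) (Fin n) ℝ, X.IsSymm → Y.IsSymm →
        gD hn γ α β d (Pᵀ * X * P) (Pᵀ * Y * P) = gD hn γ α β δ (Qᵀ * X * Q) (Qᵀ * Y * Q)) ∧
    (∃ g : Matrix (Fin n) (Fin n) ℝ → Matrix (Fin n) (Fin n) ℝ →
        Matrix (Fin n) (Fin n) ℝ → ℝ,
      (∀ (P : Matrix (Fin n) (Fin n) ℝ) (d : Fin n → ℝ), P * Pᵀ = 1 → PosVec d →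
        ∀ X Y : Matrix (Fin n) (Fin n) ℝ, X.IsSymm → Y.IsSymm →
          g (P * Matrix.diagonal d * Pᵀ) X Y = gD hn γ α β d (Pᵀ * X * P) (Pᵀ * Y * P)) ∧
      (∀ R : Matrix (Fin n) (Fin n) ℝ, R * Rᵀ = 1 →
        ∀ Sig : Matrix (Fin n) (Fin n) ℝ, Sig.PosDef →
        ∀ X Y : Matrix (Fin n) (Fin n) ℝ, X.IsSymm → Y.IsSymm →
          g (R * Sig * Rᵀ) (R * X * Rᵀ) (R * Y * Rᵀ) = g Sig X Y) ∧
      (∀ Sig : Matrix (Fin n) (Fin n) ℝ, Sig.PosDef →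
        ∀ X Y, X.IsSymm → Y.IsSymm → g Sig X Y = g Sig Y X) ∧
      (∀ Sig : Matrix (Fin n) (Fin n) ℝ, Sig.PosDef →
        ∀ X Y Z, X.IsSymm → Y.IsSymm → Z.IsSymm →
          g Sig (X + Y) Z = g Sig X Z + g Sig Y Z) ∧
      (∀ Sig : Matrix (Fin n) (Fin n) ℝ, Sig.PosDef →
        ∀ (c : ℝ) (X Y : Matrix (Fin n) (Fin n) ℝ), X.IsSymm → Y.IsSymm →
          g Sig (c • X) Y = c * g Sig X Y) ∧
      (∀ Sig : Matrix (Fin n) (Fin n) ℝ, Sig.PosDef →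
        ∀ X, X.IsSymm → X ≠ 0 → 0 < g Sig X X)) := by
  have hwell := fun P Q d δ hP hQ hd hδ h X Y =>
    aux_well hn γ α β hcompat hγsym hαsym hβsym P Q d δ hP hQ hd hδ h X Y
  refine ⟨fun P Q d δ hP hQ hd hδ h X Y _ _ => hwell P Q d δ hP hQ hd hδ h X Y, ?_⟩
  classical
  let g : Matrix (Fin n) (Fin n) ℝ → Matrix (Fin n) (Fin n) ℝ →
        Matrix (Fin n) (Fin n) ℝ → ℝ := fun S X Y =>
    if h : S.PosDef then
      gD hn γ α β (aux_spec S h).choose_spec.choose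
        ((aux_spec S h).chooseᵀ * X * (aux_spec S h).choose)
        ((aux_spec S h).chooseᵀ * Y * (aux_spec S h).choose)
    else 0
  have hg : ∀ (P : Matrix (Fin n) (Fin n) ℝ) (d : Fin n → ℝ), P * Pᵀ = 1 → PosVec d →
        ∀ X Y : Matrix (Fin n) (Fin n) ℝ,
          g (P * Matrix.diagonal d * Pᵀ) X Y = gD hn γ α β d (Pᵀ * X * P) (Pᵀ * Y * P) := by
    intro P d hP hd X Y
    have hpd : (P * Matrix.diagonal d * Pᵀ).PosDef := by
      have h1 : (Matrix.diagonal d).PosDef := Matrix.PosDef.diagonal hd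
      have h2 := h1.mul_mul_conjTranspose_same (B := P) (by
        intro v w hvw
        have := congrArg (fun u => u ᵥ* Pᵀ) hvw
        simpa [Matrix.vecMul_vecMul, hP] using this)
      rwa [Matrix.conjTranspose_eq_transpose_of_trivial] at h2
    obtain ⟨h1, h2, h3⟩ := (aux_spec _ hpd).choose_spec.choose_spec
    simp only [g]
    rw [dif_pos hpd]
    exact hwell _ _ _ _ h1 hP h2 hd h3.symm X Y
  refine ⟨g, fun P d hP hd X Y _ _ => hg P d hP hd X Y, ?_, ?_, ?_, ?_, ?_⟩
  · intro R hR S hS X Y _ _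
    obtain ⟨P, d, hP, hd, rfl⟩ := aux_spec S hS
    have hR' : Rᵀ * R = 1 := mul_eq_one_comm.mp hR
    have e1 : R * (P * Matrix.diagonal d * Pᵀ) * Rᵀ = (R * P) * Matrix.diagonal d * (R * P)ᵀ := by
      rw [Matrix.transpose_mul]; simp only [Matrix.mul_assoc]
    have e2 : (R * P) * (R * P)ᵀ = 1 := by
      rw [Matrix.transpose_mul, Matrix.mul_assoc, ← Matrix.mul_assoc P, hP, Matrix.one_mul, hR]
    have e3 : ∀ Z : Matrix (Fin n) (Fin n) ℝ,
        (R * P)ᵀ * (R * Z * Rᵀ) * (R * P) = Pᵀ * Z * P := by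
      intro Z
      have : (R * P)ᵀ * (R * Z * Rᵀ) * (R * P) = Pᵀ * (Rᵀ * R) * Z * (Rᵀ * R) * P := by
        rw [Matrix.transpose_mul]; simp only [Matrix.mul_assoc]
      rw [this, hR', Matrix.mul_one, Matrix.mul_one]
    rw [e1, hg _ _ e2 hd, hg _ _ hP hd, e3, e3]
  · intro S hS X Y _ _
    obtain ⟨P, d, hP, hd, rfl⟩ := aux_spec S hS
    rw [hg _ _ hP hd, hg _ _ hP hd]
    exact aux_symm hn γ α β hposS d hd _ _
  · intro S hS X Y Z _ _ _
    obtain ⟨P, d, hP, hd, rfl⟩ := aux_spec S hS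
    rw [hg _ _ hP hd, hg _ _ hP hd, hg _ _ hP hd, Matrix.mul_add, Matrix.add_mul, aux_add]
  · intro S hS c X Y _ _
    obtain ⟨P, d, hP, hd, rfl⟩ := aux_spec S hS
    rw [hg _ _ hP hd, hg _ _ hP hd, Matrix.mul_smul, Matrix.smul_mul, aux_smul]
  · intro S hS X _ hX
    obtain ⟨P, d, hP, hd, rfl⟩ := aux_spec S hS
    rw [hg _ _ hP hd]
    refine aux_pos hn γ α β hαpos hposS d hd _ ?_
    intro h0
    apply hX
    have : P * (Pᵀ * X * P) * Pᵀ = (P * Pᵀ) * X * (P * Pᵀ) := by simp only [Matrix.mul_assoc]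
    rw [h0, hP] at this
    simpa using this.symm
end

section
/- Let (g_Σ)_{Σ ∈ SPD(n)} be the O(n)-invariant family of inner products on Sym(n) determined by functions γ, α : (0,∞)ⁿ → (0,∞) and β : (0,∞)ⁿ → ℝ satisfying the compatibility, positivity and symmetry conditions, via g_D(X,X) = Σ_i γ(d_i, d_{k≠i}) X_{ii}² + Σ_{i≠j} α(d_i, d_j, d_{k≠i,j}) X_{ij}² + Σ_{i≠j} β(d_i, d_j, d_{k≠i,j}) X_{ii} X_{jj} at positive diagonal D and g_Σ(X,X) = g_D(PᵀXP, PᵀXP) for Σ = PDPᵀ. If α, β, γ are continuous, then g is continuous in the following sense: for every ε > 0 and every Σ ∈ SPD(n), there exists η > 0 such that for all Λ ∈ SPD(n) with ‖Σ − Λ‖_F ≤ η and all X ∈ Sym(n), |g_Σ(X,X) − g_Λ(X,X)| ≤ ε·‖X‖_F². -/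
open Matrix Finset

open Filter Topology in
theorem aux_box_compact (n : ℕ) :
    IsCompact {A : Matrix (Fin n) (Fin n) ℝ | ∀ i j, A i j ∈ Set.Icc (-1 : ℝ) 1} := by
  have h : IsCompact (Set.pi Set.univ fun _ : Fin n => Set.pi Set.univ fun _ : Fin n =>
      Set.Icc (-1 : ℝ) 1) :=
    isCompact_univ_pi fun _ => isCompact_univ_pi fun _ => isCompact_Icc
  have e : {A : Matrix (Fin n) (Fin n) ℝ | ∀ i j, A i j ∈ Set.Icc (-1 : ℝ) 1} =
      (Set.pi Set.univ fun _ : Fin n => Set.pi Set.univ fun _ : Fin n =>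
      Set.Icc (-1 : ℝ) 1) := by
    apply Set.ext
    intro A
    exact ⟨fun H i _ j _ => H i j, fun H i j => H i trivial j trivial⟩
  rw [e]
  exact h

theorem aux_orth_box {n : ℕ} {P : Matrix (Fin n) (Fin n) ℝ} (h : P * Pᵀ = 1) (i j : Fin n) :
    P i j ∈ Set.Icc (-1 : ℝ) 1 := by
  have h1 : (P * Pᵀ) i i = 1 := by rw [h]; simp
  rw [Matrix.mul_apply] at h1
  simp only [Matrix.transpose_apply] at h1
  have h2 := Finset.single_le_sum (f := fun j => P i j * P i j)
    (fun k _ => mul_self_nonneg _) (Finset.mem_univ j)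
  have h2 : P i j * P i j ≤ 1 := h2.trans_eq h1
  constructor <;> nlinarith

theorem aux_frob_sq {n : ℕ} (A : Matrix (Fin n) (Fin n) ℝ) :
    frobNorm A ^ 2 = ∑ i, ∑ j, (A i j) ^ 2 :=
  Real.sq_sqrt (Finset.sum_nonneg fun _ _ => Finset.sum_nonneg fun _ _ => sq_nonneg _)

theorem aux_entry_le {n : ℕ} (A : Matrix (Fin n) (Fin n) ℝ) (i j : Fin n) :
    |A i j| ≤ frobNorm A := by
  apply Real.abs_le_sqrt
  calc (A i j) ^ 2 ≤ ∑ j, (A i j) ^ 2 :=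
        Finset.single_le_sum (f := fun j => (A i j) ^ 2) (fun k _ => sq_nonneg _)
          (Finset.mem_univ j)
    _ ≤ _ := Finset.single_le_sum (f := fun i => ∑ j, (A i j) ^ 2)
          (fun k _ => Finset.sum_nonneg fun _ _ => sq_nonneg _) (Finset.mem_univ i)

theorem aux_spectral_s11 {n : ℕ} (A : Matrix (Fin n) (Fin n) ℝ) (hA : A.PosDef) :
    ∃ (P : Matrix (Fin n) (Fin n) ℝ) (d : Fin n → ℝ), P * Pᵀ = 1 ∧ PosVec d ∧
      A = P * Matrix.diagonal d * Pᵀ := by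
  refine ⟨hA.1.eigenvectorUnitary, hA.1.eigenvalues, ?_, fun i => hA.eigenvalues_pos i, ?_⟩
  · have := Unitary.mul_star_self_of_mem hA.1.eigenvectorUnitary.2
    rw [Matrix.star_eq_conjTranspose, Matrix.conjTranspose_eq_transpose_of_trivial] at this
    exact this
  · have := hA.1.spectral_theorem
    rw [Unitary.conjStarAlgAut_apply] at this
    rw [Matrix.star_eq_conjTranspose, Matrix.conjTranspose_eq_transpose_of_trivial] at this
    exact this

theorem aux_gD_smul {n : ℕ} (hn : 2 ≤ n) (γ α β : (Fin n → ℝ) → ℝ) (d : Fin n → ℝ)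
    (c : ℝ) (X : Matrix (Fin n) (Fin n) ℝ) :
    gD hn γ α β d (c • X) (c • X) = c ^ 2 * gD hn γ α β d X X := by
  simp only [gD, Matrix.smul_apply, smul_eq_mul, mul_add, Finset.mul_sum, mul_ite, mul_zero]
  congr 1
  · congr 1
    · exact Finset.sum_congr rfl fun i _ => by ring
    · exact Finset.sum_congr rfl fun i _ => Finset.sum_congr rfl fun j _ => by split_ifs <;> ring
  · exact Finset.sum_congr rfl fun i _ => Finset.sum_congr rfl fun j _ => by split_ifs <;> ring

open Filter Topology in
theorem aux_comp {n : ℕ} (f : (Fin n → ℝ) → ℝ) (hf : ContinuousOn f {d : Fin n → ℝ | PosVec d})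
    (σ : Equiv.Perm (Fin n)) (u : ℕ → Fin n → ℝ) (d : Fin n → ℝ)
    (hu : Tendsto u atTop (𝓝 d)) (hup : ∀ k, PosVec (u k)) (hd : PosVec d) :
    Tendsto (fun k => f (u k ∘ σ)) atTop (𝓝 (f (d ∘ σ))) := by
  have h1 : Tendsto (fun k => u k ∘ σ) atTop (𝓝 (d ∘ σ)) := by
    rw [tendsto_pi_nhds] at hu ⊢
    exact fun i => hu (σ i)
  have h2 := hf (d ∘ σ) (fun i => hd (σ i))
  exact h2.tendsto.comp (tendsto_nhdsWithin_iff.2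
    ⟨h1, Eventually.of_forall fun k i => hup k (σ i)⟩)

open Filter Topology in
theorem aux_gD_tendsto {n : ℕ} (hn : 2 ≤ n) (γ α β : (Fin n → ℝ) → ℝ)
    (hγc : ContinuousOn γ {d : Fin n → ℝ | PosVec d})
    (hαc : ContinuousOn α {d : Fin n → ℝ | PosVec d})
    (hβc : ContinuousOn β {d : Fin n → ℝ | PosVec d})
    (u : ℕ → Fin n → ℝ) (d : Fin n → ℝ)
    (hu : Tendsto u atTop (𝓝 d)) (hup : ∀ k, PosVec (u k)) (hd : PosVec d)
    (Z : ℕ → Matrix (Fin n) (Fin n) ℝ) (Z0 : Matrix (Fin n) (Fin n) ℝ)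
    (hZ : Tendsto Z atTop (𝓝 Z0)) :
    Tendsto (fun k => gD hn γ α β (u k) (Z k) (Z k)) atTop (𝓝 (gD hn γ α β d Z0 Z0)) := by
  have hz : ∀ i j, Tendsto (fun k => Z k i j) atTop (𝓝 (Z0 i j)) := fun i j =>
    ((continuous_id.matrix_elem i j).tendsto Z0).comp hZ
  unfold gD reord1 reord2
  refine ((tendsto_finsetSum _ fun i _ => ?_).add
    (tendsto_finsetSum _ fun i _ => tendsto_finsetSum _ fun j _ => ?_)).add
    (tendsto_finsetSum _ fun i _ => tendsto_finsetSum _ fun j _ => ?_)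
  · exact ((aux_comp γ hγc _ u d hu hup hd).mul (hz _ _)).mul (hz _ _)
  · split_ifs
    · exact tendsto_const_nhds
    · exact ((aux_comp α hαc _ u d hu hup hd).mul (hz _ _)).mul (hz _ _)
  · split_ifs
    · exact tendsto_const_nhds
    · exact ((aux_comp β hβc _ u d hu hup hd).mul (hz _ _)).mul (hz _ _)

/-- If `α, β, γ` are continuous (on the positive orthant), then the
`O(n)`-invariant metric `g` they determine is continuous: for every `ε > 0` and `Σ ∈ SPD(n)`
there is `η > 0` such that `‖Σ − Λ‖_F ≤ η` implies
`|g_Σ(X,X) − g_Λ(X,X)| ≤ ε ‖X‖_F²` for all symmetric `X`. -/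
theorem o_n_invariant_metric_continuity (n : ℕ) (hn : 2 ≤ n)
    (γ α β : (Fin n → ℝ) → ℝ)
    (hγpos : ∀ d, PosVec d → 0 < γ d) (hαpos : ∀ d, PosVec d → 0 < α d)
    (hcompat : CompatCond hn γ α β) (hposS : PositivityCond hn γ β)
    (hγsym : Sym1n hn γ) (hαsym : Sym2n hn α) (hβsym : Sym2n hn β)
    (hγc : ContinuousOn γ {d : Fin n → ℝ | PosVec d})
    (hαc : ContinuousOn α {d : Fin n → ℝ | PosVec d})
    (hβc : ContinuousOn β {d : Fin n → ℝ | PosVec d})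
    (g : Matrix (Fin n) (Fin n) ℝ → Matrix (Fin n) (Fin n) ℝ → ℝ)
    (hg : ∀ (P : Matrix (Fin n) (Fin n) ℝ) (d : Fin n → ℝ), P * Pᵀ = 1 → PosVec d →
      ∀ X : Matrix (Fin n) (Fin n) ℝ, X.IsSymm →
        g (P * Matrix.diagonal d * Pᵀ) X = gD hn γ α β d (Pᵀ * X * P) (Pᵀ * X * P)) :
    ∀ ε : ℝ, 0 < ε → ∀ Sig : Matrix (Fin n) (Fin n) ℝ, Sig.PosDef →
      ∃ η : ℝ, 0 < η ∧ ∀ Lam : Matrix (Fin n) (Fin n) ℝ, Lam.PosDef →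
        frobNorm (Sig - Lam) ≤ η → ∀ X : Matrix (Fin n) (Fin n) ℝ, X.IsSymm →
          |g Sig X - g Lam X| ≤ ε * frobNorm X ^ 2 := by
  classical
  intro ε hε Sig hSig
  by_contra hcon
  push Not at hcon
  have hk : ∀ k : ℕ, (0 : ℝ) < 1 / ((k : ℝ) + 1) := fun k => by positivity
  choose L hL hLn X hX hXbad using fun k : ℕ => hcon _ (hk k)
  choose P d hP hd hLe using fun k => aux_spectral_s11 (L k) (hL k)
  let Y : ℕ → Matrix (Fin n) (Fin n) ℝ := fun k => (frobNorm (X k))⁻¹ • X k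
  have hYbox : ∀ k i j, Y k i j ∈ Set.Icc (-1 : ℝ) 1 := by
    intro k i j
    refine abs_le.1 ?_
    have h := aux_entry_le (X k) i j
    have h0 : 0 ≤ frobNorm (X k) := Real.sqrt_nonneg _
    simp only [Y, Matrix.smul_apply, smul_eq_mul, abs_mul, abs_inv, abs_of_nonneg h0]
    exact inv_mul_le_one_of_le₀ h h0
  have hXY : ∀ k, X k = frobNorm (X k) • Y k := by
    intro k
    by_cases h0 : frobNorm (X k) = 0
    · ext i j
      have h := aux_entry_le (X k) i j
      rw [h0] at h
      have := abs_nonpos_iff.1 h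
      simp [h0, this]
    · simp [Y, smul_smul, h0]
  haveI : FirstCountableTopology (Matrix (Fin n) (Fin n) ℝ) :=
    inferInstanceAs (FirstCountableTopology (Fin n → Fin n → ℝ))
  obtain ⟨⟨P0, Y0⟩, -, φ, hφ, hlim⟩ := ((aux_box_compact n).prod (aux_box_compact n)).tendsto_subseq
    (x := fun k => (P k, Y k)) (fun k => ⟨fun i j => aux_orth_box (hP k) i j, hYbox k⟩)
  have hPl : Filter.Tendsto (fun k => P (φ k)) Filter.atTop (nhds P0) := (continuous_fst.tendsto _).comp hlim
  have hYl : Filter.Tendsto (fun k => Y (φ k)) Filter.atTop (nhds Y0) := (continuous_snd.tendsto _).comp hlim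
  have hPT : Filter.Tendsto (fun k => (P (φ k))ᵀ) Filter.atTop (nhds P0ᵀ) :=
    ((continuous_id.matrix_transpose).tendsto P0).comp hPl
  have hLl : Filter.Tendsto L Filter.atTop (nhds Sig) := by
    refine tendsto_pi_nhds.2 fun i => tendsto_pi_nhds.2 fun j => ?_
    rw [tendsto_iff_dist_tendsto_zero]
    refine squeeze_zero (fun _ => dist_nonneg) (fun k => ?_)
      tendsto_one_div_add_atTop_nhds_zero_nat
    rw [dist_comm, Real.dist_eq]
    exact (aux_entry_le (Sig - L k) i j).trans (hLn k)
  have hP0 : P0 * P0ᵀ = 1 := by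
    refine tendsto_nhds_unique (hPl.mul hPT) ?_
    simp only [hP]
    exact tendsto_const_nhds
  have hP0' : P0ᵀ * P0 = 1 := mul_eq_one_comm.1 hP0
  have hdiag : ∀ k, (P k)ᵀ * L k * P k = Matrix.diagonal (d k) := by
    intro k
    have h' : (P k)ᵀ * P k = 1 := mul_eq_one_comm.1 (hP k)
    calc (P k)ᵀ * L k * P k = ((P k)ᵀ * P k) * Matrix.diagonal (d k) * ((P k)ᵀ * P k) := by
          conv_lhs => rw [hLe k]
          simp only [Matrix.mul_assoc]
      _ = _ := by rw [h']; simp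
  have hDl : Filter.Tendsto (fun k => Matrix.diagonal (d (φ k))) Filter.atTop (nhds (P0ᵀ * Sig * P0)) := by
    simp only [← hdiag]
    exact (hPT.mul (hLl.comp hφ.tendsto_atTop)).mul hPl
  have hel : ∀ i j, Filter.Tendsto (fun k => Matrix.diagonal (d (φ k)) i j) Filter.atTop
      (nhds ((P0ᵀ * Sig * P0) i j)) := fun i j =>
    ((continuous_id.matrix_elem i j).tendsto _).comp hDl
  let d0 : Fin n → ℝ := fun i => (P0ᵀ * Sig * P0) i i
  have hd0 : P0ᵀ * Sig * P0 = Matrix.diagonal d0 := by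
    ext i j
    by_cases hij : i = j
    · subst hij; simp [d0]
    · rw [Matrix.diagonal_apply_ne _ hij]
      have := hel i j
      simp only [Matrix.diagonal_apply_ne _ hij] at this
      exact tendsto_nhds_unique this tendsto_const_nhds
  have hdl : Filter.Tendsto (fun k => d (φ k)) Filter.atTop (nhds d0) := by
    refine tendsto_pi_nhds.2 fun i => ?_
    simpa using hel i i
  have hSe : Sig = P0 * Matrix.diagonal d0 * P0ᵀ := by
    rw [← hd0]
    calc Sig = (P0 * P0ᵀ) * Sig * (P0 * P0ᵀ) := by rw [hP0]; simp
      _ = _ := by simp only [Matrix.mul_assoc]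
  have hd0p : PosVec d0 := by
    have hu : IsUnit P0 := ⟨⟨P0, P0ᵀ, hP0, hP0'⟩, rfl⟩
    have hpd : (P0ᵀ * Sig * P0).PosDef := by
      have := hSig.conjTranspose_mul_mul_same (B := P0) (Matrix.mulVec_injective_of_isUnit hu)
      rwa [Matrix.conjTranspose_eq_transpose_of_trivial] at this
    exact fun i => hpd.diag_pos
  have key1 := aux_gD_tendsto hn γ α β hγc hαc hβc _ d0 hdl (fun k => hd _) hd0p _ _
    ((hPT.mul hYl).mul hPl)
  have key2 := aux_gD_tendsto hn γ α β hγc hαc hβc _ d0 (tendsto_const_nhds (f := Filter.atTop))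
    (fun k => hd0p) hd0p _ _ (((tendsto_const_nhds (x := P0ᵀ)).mul hYl).mul
      (tendsto_const_nhds (x := P0)))
  have key := (key2.sub key1).abs
  rw [sub_self, abs_zero] at key
  obtain ⟨k, hkk⟩ := (key.eventually (gt_mem_nhds hε)).exists
  have hb := hXbad (φ k)
  have e1 : g Sig (X (φ k)) = frobNorm (X (φ k)) ^ 2 *
      gD hn γ α β d0 (P0ᵀ * Y (φ k) * P0) (P0ᵀ * Y (φ k) * P0) := by
    rw [← aux_gD_smul, hSe, hg P0 d0 hP0 hd0p _ (hX _)]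
    conv_lhs => rw [hXY (φ k)]
    simp only [Matrix.mul_smul, Matrix.smul_mul]
  have e2 : g (L (φ k)) (X (φ k)) = frobNorm (X (φ k)) ^ 2 *
      gD hn γ α β (d (φ k)) ((P (φ k))ᵀ * Y (φ k) * P (φ k))
        ((P (φ k))ᵀ * Y (φ k) * P (φ k)) := by
    rw [← aux_gD_smul, hLe (φ k), hg _ _ (hP _) (hd _) _ (hX _)]
    conv_lhs => rw [hXY (φ k)]
    simp only [Matrix.mul_smul, Matrix.smul_mul]
  rw [e1, e2, ← mul_sub, abs_mul, abs_of_nonneg (sq_nonneg _)] at hb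
  have := mul_le_mul_of_nonneg_left hkk.le (sq_nonneg (frobNorm (X (φ k))))
  linarith
end

section
/- Let Σ, Λ be n×n real symmetric positive semidefinite matrices, and let D = diag(d₁,…,d_n) and Δ = diag(δ₁,…,δ_n) be the diagonal matrices of their eigenvalues ordered increasingly (d₁ ≤ … ≤ d_n, δ₁ ≤ … ≤ δ_n, counted with multiplicity). Then ‖D − Δ‖_F ≤ ‖Σ − Λ‖_F. -/
open Matrix Finset

theorem frob_sq_eq_trace {n : ℕ} (A : Matrix (Fin n) (Fin n) ℝ) :
    ∑ i, ∑ j, (A i j) ^ 2 = (A * Aᵀ).trace := by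
  simp [Matrix.trace, Matrix.mul_apply, sq]

theorem perm_ineq {n : ℕ} (d δ : Fin n → ℝ) (hd : Monotone d) (hδ : Monotone δ)
    (σ : Equiv.Perm (Fin n)) :
    ∑ i, (d i - δ i) ^ 2 ≤ ∑ i, (d i - δ (σ i)) ^ 2 := by
  have h1 : ∑ i, d i * δ (σ i) ≤ ∑ i, d i * δ i :=
    (hd.monovary hδ).sum_mul_comp_perm_le_sum_mul
  have h2 : ∑ i, δ (σ i) ^ 2 = ∑ i, δ i ^ 2 := Equiv.sum_comp σ (fun i => δ i ^ 2)
  simp only [sub_sq, Finset.sum_add_distrib, Finset.sum_sub_distrib, mul_assoc,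
    ← Finset.mul_sum]
  linarith

theorem ds_ineq {n : ℕ} (d δ : Fin n → ℝ) (hd : Monotone d) (hδ : Monotone δ)
    (M : Matrix (Fin n) (Fin n) ℝ) (hM : M ∈ doublyStochastic ℝ (Fin n)) :
    ∑ i, (d i - δ i) ^ 2 ≤ ∑ i, ∑ j, (d i - δ j) ^ 2 * M i j := by
  obtain ⟨w, hw0, hw1, rfl⟩ := exists_eq_sum_perm_of_mem_doublyStochastic hM
  have key : ∑ i, ∑ j, (d i - δ j) ^ 2 * (∑ σ, w σ • σ.permMatrix ℝ) i j
      = ∑ σ : Equiv.Perm (Fin n), w σ * ∑ i, (d i - δ (σ i)) ^ 2 := by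
    simp only [Matrix.sum_apply, Matrix.smul_apply, smul_eq_mul, Finset.mul_sum]
    rw [Finset.sum_congr rfl (fun i _ => Finset.sum_comm), Finset.sum_comm]
    refine Finset.sum_congr rfl fun σ _ => Finset.sum_congr rfl fun i _ => ?_
    simp [Equiv.Perm.permMatrix, PEquiv.toMatrix_apply, Equiv.toPEquiv_apply, mul_comm]
  rw [key]
  calc ∑ i, (d i - δ i) ^ 2 = ∑ σ : Equiv.Perm (Fin n), w σ * ∑ i, (d i - δ i) ^ 2 := by
        rw [← Finset.sum_mul, hw1, one_mul]
    _ ≤ _ := Finset.sum_le_sum fun σ _ =>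
        mul_le_mul_of_nonneg_left (perm_ineq d δ hd hδ σ) (hw0 σ)

/-- If `Σ = P D Pᵀ` and `Λ = Q Δ Qᵀ` are positive semidefinite matrices with
increasingly ordered eigenvalue matrices `D, Δ`, then `‖D − Δ‖_F ≤ ‖Σ − Λ‖_F`. -/
theorem ordered_eigenvalues_frobenius_stable (n : ℕ) (d δ : Fin n → ℝ)
    (hd0 : ∀ i, 0 ≤ d i) (hδ0 : ∀ i, 0 ≤ δ i)
    (hd : Monotone d) (hδ : Monotone δ)
    (P Q : Matrix (Fin n) (Fin n) ℝ) (hP : P * Pᵀ = 1) (hQ : Q * Qᵀ = 1) :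
    frobNorm (Matrix.diagonal d - Matrix.diagonal δ) ≤
      frobNorm (P * Matrix.diagonal d * Pᵀ - Q * Matrix.diagonal δ * Qᵀ) := by
  have hP' : Pᵀ * P = 1 := mul_eq_one_comm.mp hP
  have hQ' : Qᵀ * Q = 1 := mul_eq_one_comm.mp hQ
  obtain ⟨W, hW⟩ : ∃ W, W = Pᵀ * Q := ⟨_, rfl⟩
  have hW1 : W * Wᵀ = 1 := by
    rw [hW, transpose_mul, transpose_transpose, Matrix.mul_assoc, ← Matrix.mul_assoc Q, hQ,
      Matrix.one_mul, hP']
  have hW2 : Wᵀ * W = 1 := mul_eq_one_comm.mp hW1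
  obtain ⟨B, hB⟩ : ∃ B, B = Matrix.diagonal d * W - W * Matrix.diagonal δ := ⟨_, rfl⟩
  have hA : P * Matrix.diagonal d * Pᵀ - Q * Matrix.diagonal δ * Qᵀ = P * B * Qᵀ := by
    have e1 : P * (Matrix.diagonal d * (Pᵀ * Q)) * Qᵀ
        = P * Matrix.diagonal d * Pᵀ * (Q * Qᵀ) := by simp only [Matrix.mul_assoc]
    have e2 : P * (Pᵀ * Q * Matrix.diagonal δ) * Qᵀ
        = (P * Pᵀ) * (Q * Matrix.diagonal δ * Qᵀ) := by simp only [Matrix.mul_assoc]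
    rw [hB, hW, Matrix.mul_sub, Matrix.sub_mul, e1, e2, hP, hQ, Matrix.mul_one, Matrix.one_mul]
  have hR : ∑ i, ∑ j, ((P * B * Qᵀ) i j) ^ 2 = ∑ i, ∑ j, (B i j) ^ 2 := by
    rw [frob_sq_eq_trace, frob_sq_eq_trace]
    have : P * B * Qᵀ * (P * B * Qᵀ)ᵀ = P * (B * (Qᵀ * Q) * Bᵀ * Pᵀ) := by
      simp only [transpose_mul, transpose_transpose, Matrix.mul_assoc]
    rw [this, Matrix.trace_mul_comm, hQ', Matrix.mul_one, Matrix.mul_assoc, hP', Matrix.mul_one]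
  have hM : (Matrix.of fun i j => W i j ^ 2) ∈ doublyStochastic ℝ (Fin n) := by
    rw [mem_doublyStochastic_iff_sum]
    refine ⟨fun i j => sq_nonneg _, fun i => ?_, fun j => ?_⟩
    · have := congrFun (congrFun hW1 i) i
      simpa [Matrix.mul_apply, sq] using this
    · have := congrFun (congrFun hW2 j) j
      simpa [Matrix.mul_apply, sq] using this
  have hL : ∑ i, ∑ j, ((Matrix.diagonal d - Matrix.diagonal δ) i j) ^ 2
      = ∑ i, (d i - δ i) ^ 2 := by
    refine Finset.sum_congr rfl fun i _ => ?_
    rw [Finset.sum_eq_single i]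
    · simp
    · intro j _ hj
      simp [Matrix.diagonal_apply_ne' _ hj]
    · simp
  unfold frobNorm
  apply Real.sqrt_le_sqrt
  rw [hA, hR, hL]
  refine (ds_ineq d δ hd hδ _ hM).trans (le_of_eq ?_)
  refine Finset.sum_congr rfl fun i _ => Finset.sum_congr rfl fun j _ => ?_
  rw [hB, Matrix.sub_apply, Matrix.diagonal_mul, Matrix.mul_diagonal, Matrix.of_apply]
  ring
end

section
/- Let Σ, Λ be n×n real symmetric positive semidefinite matrices with eigenvalue matrices D = diag(d₁,…,d_n) and Δ = diag(δ₁,…,δ_n) ordered increasingly, and assume Σ has at least two distinct eigenvalues; set m = min{(λ − μ)² : λ ≠ μ are eigenvalues of Σ}. Then for every Q ∈ O(n) with Λ = QΔQᵀ, there exists P ∈ O(n) with Σ = PDPᵀ and ‖P − Q‖_F² ≤ 4·√(n/m)·‖Σ − Λ‖_F. -/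
open Matrix Finset

lemma es_spec {n : ℕ} (S : Matrix (Fin n) (Fin n) ℝ) (hS : S.IsHermitian) :
    ∃ (U : Matrix (Fin n) (Fin n) ℝ) (s : Fin n → ℝ), Uᵀ * U = 1 ∧ U * Uᵀ = 1 ∧
      Uᵀ * S * U = diagonal s := by
  refine ⟨hS.eigenvectorUnitary, hS.eigenvalues, ?_, ?_, ?_⟩
  · have := Unitary.coe_star_mul_self hS.eigenvectorUnitary
    simpa [star_eq_conjTranspose] using this
  · have := Unitary.coe_mul_star_self hS.eigenvectorUnitary
    simpa [star_eq_conjTranspose] using this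
  · have h := hS.spectral_theorem
    have h1 := Unitary.coe_star_mul_self hS.eigenvectorUnitary
    rw [Unitary.conjStarAlgAut_apply] at h
    have e : (star (hS.eigenvectorUnitary : Matrix (Fin n) (Fin n) ℝ)) =
      (hS.eigenvectorUnitary : Matrix (Fin n) (Fin n) ℝ)ᵀ := by
      simp [star_eq_conjTranspose]
    simp only [e] at h h1
    have h2 : (RCLike.ofReal ∘ hS.eigenvalues : Fin n → ℝ) = hS.eigenvalues := by ext; simp
    rw [h2] at h
    generalize hS.eigenvalues = s at *
    generalize (hS.eigenvectorUnitary : Matrix (Fin n) (Fin n) ℝ) = U at *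
    rw [h]
    calc Uᵀ * (U * diagonal s * Uᵀ) * U = (Uᵀ * U) * diagonal s * (Uᵀ * U) := by
          simp only [Matrix.mul_assoc]
      _ = _ := by rw [h1]; simp

lemma es_polar {n : ℕ} (A D : Matrix (Fin n) (Fin n) ℝ) (hdet : A.det ≠ 0)
    (hc : ∀ x : Fin n → ℝ, ∑ i, ((A *ᵥ x) i) ^ 2 ≤ ∑ i, x i ^ 2)
    (h1 : A * D = D * A) (h2 : Aᵀ * D = D * Aᵀ) :
    ∃ R : Matrix (Fin n) (Fin n) ℝ, R * Rᵀ = 1 ∧ R * D = D * R ∧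
      trace (Aᵀ * A) ≤ trace (Rᵀ * A) := by
  obtain ⟨U, s, hU, hU', hs⟩ := es_spec (Aᵀ * A) (by
    simp [Matrix.IsHermitian, conjTranspose_eq_transpose_of_trivial])
  have hVV : (A * U)ᵀ * (A * U) = diagonal s := by
    rw [← hs, transpose_mul]; simp only [Matrix.mul_assoc]
  have hse : ∀ i, s i = ∑ k, ((A * U) k i) ^ 2 := fun i => by
    have := congrFun (congrFun hVV i) i
    simp only [mul_apply, transpose_apply, diagonal_apply_eq] at this
    rw [← this]; simp only [mul_apply, sq]
  have hs0 : ∀ i, 0 ≤ s i := fun i => by rw [hse]; positivity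
  have hs1 : ∀ i, s i ≤ 1 := fun i => by
    rw [hse]
    have := hc (fun k => U k i)
    have h3 : ∑ k, U k i ^ 2 = 1 := by
      have := congrFun (congrFun hU i) i
      simpa [mul_apply, sq] using this
    rw [h3] at this
    exact this
  have hUd : U.det ≠ 0 := by
    intro h
    have := congrArg det hU
    simp [h] at this
  have hsp : ∀ i, 0 < s i := fun i => by
    refine lt_of_le_of_ne (hs0 i) fun h => ?_
    have := congrArg det hVV
    rw [det_diagonal, Finset.prod_eq_zero (mem_univ i) h.symm] at this
    simp [hdet, hUd] at this
  let g : Fin n → ℝ := fun i => (√(s i))⁻¹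
  have hgs : ∀ i, g i * s i = √(s i) := fun i => by
    have := Real.sqrt_pos.2 (hsp i)
    simp only [g]; field_simp; rw [Real.sq_sqrt (hs0 i)]
  have hgsg : diagonal g * diagonal s * diagonal g = 1 := by
    rw [diagonal_mul_diagonal, diagonal_mul_diagonal, ← diagonal_one]
    congr 1; ext i; rw [hgs]
    have := Real.sqrt_pos.2 (hsp i)
    simp only [g]; field_simp
  -- commutation
  have hE : Uᵀ * D * U * diagonal s = diagonal s * (Uᵀ * D * U) := by
    rw [← hs]
    calc Uᵀ * D * U * (Uᵀ * (Aᵀ * A) * U) = Uᵀ * D * (U * Uᵀ) * (Aᵀ * A) * U := by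
          simp only [Matrix.mul_assoc]
      _ = Uᵀ * (D * Aᵀ) * A * U := by rw [hU']; simp only [Matrix.mul_assoc, Matrix.one_mul]
      _ = Uᵀ * Aᵀ * (D * A) * U := by rw [← h2]; simp only [Matrix.mul_assoc]
      _ = Uᵀ * Aᵀ * A * (U * Uᵀ) * D * U := by rw [← h1, hU']; simp only [Matrix.mul_assoc, Matrix.one_mul]
      _ = _ := by simp only [Matrix.mul_assoc]
  have hEg : Uᵀ * D * U * diagonal g = diagonal g * (Uᵀ * D * U) := by
    ext i j
    have := congrFun (congrFun hE i) j
    rw [mul_diagonal, diagonal_mul] at this ⊢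
    by_cases h : s i = s j
    · simp only [g, h]; ring
    · have h0 : (Uᵀ * D * U) i j * (s j - s i) = 0 := by linarith
      rcases mul_eq_zero.1 h0 with h0 | h0
      · rw [h0]; simp
      · exact absurd (by linarith) h
  refine ⟨A * U * diagonal g * Uᵀ, ?_, ?_, ?_⟩
  · rw [mul_eq_one_comm]
    calc (A * U * diagonal g * Uᵀ)ᵀ * (A * U * diagonal g * Uᵀ)
        = U * diagonal g * ((A * U)ᵀ * (A * U)) * diagonal g * Uᵀ := by
          simp only [transpose_mul, diagonal_transpose, transpose_transpose, Matrix.mul_assoc]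
      _ = U * (diagonal g * diagonal s * diagonal g) * Uᵀ := by
          rw [hVV]; simp only [Matrix.mul_assoc]
      _ = 1 := by rw [hgsg, Matrix.mul_one, hU']
  · calc A * U * diagonal g * Uᵀ * D = A * U * diagonal g * Uᵀ * D * (U * Uᵀ) := by
          rw [hU', Matrix.mul_one]
      _ = A * U * (diagonal g * (Uᵀ * D * U)) * Uᵀ := by simp only [Matrix.mul_assoc]
      _ = A * (U * Uᵀ) * D * U * diagonal g * Uᵀ := by rw [← hEg]; simp only [Matrix.mul_assoc]
      _ = (A * D) * U * diagonal g * Uᵀ := by rw [hU', Matrix.mul_one]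
      _ = _ := by rw [h1]; simp only [Matrix.mul_assoc]
  · have t1 : trace (Aᵀ * A) = ∑ i, s i := by
      have : trace (Uᵀ * (Aᵀ * A) * U) = trace (Aᵀ * A) := by
        rw [trace_mul_comm, ← Matrix.mul_assoc, hU', Matrix.one_mul]
      rw [← this, hs, trace_diagonal]
    have t2 : trace ((A * U * diagonal g * Uᵀ)ᵀ * A) = ∑ i, √(s i) := by
      have : (A * U * diagonal g * Uᵀ)ᵀ * A = U * (diagonal g * (A * U)ᵀ * A) := by
        simp only [transpose_mul, diagonal_transpose, transpose_transpose, Matrix.mul_assoc]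
      rw [this, trace_mul_comm]
      have : diagonal g * (A * U)ᵀ * A * U = diagonal g * diagonal s := by
        rw [← hVV]; simp only [Matrix.mul_assoc]
      rw [this, diagonal_mul_diagonal, trace_diagonal]
      exact Finset.sum_congr rfl fun i _ => hgs i
    rw [t1, t2]
    exact Finset.sum_le_sum fun i _ => Real.le_sqrt_of_sq_le (by nlinarith [hs0 i, hs1 i])

lemma es_det {n : ℕ} (A : Matrix (Fin n) (Fin n) ℝ) :
    {t : ℝ | ((1 - t) • A + t • (1 : Matrix (Fin n) (Fin n) ℝ)).det = 0}.Finite := by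
  let M : Matrix (Fin n) (Fin n) (Polynomial ℝ) :=
    (1 - Polynomial.X : Polynomial ℝ) • A.map Polynomial.C + (Polynomial.X : Polynomial ℝ) • 1
  have hM : ∀ t : ℝ, M.det.eval t = ((1 - t) • A + t • (1 : Matrix (Fin n) (Fin n) ℝ)).det := by
    intro t
    rw [← Polynomial.coe_evalRingHom, RingHom.map_det]
    congr 1
    ext i j
    by_cases h : i = j
    · subst h
      simp [M]
    · simp [M, h]
  have hne : M.det ≠ 0 := by
    intro h
    have := hM 1
    simp [h] at this
  refine (Polynomial.finite_setOfPred_isRoot hne).subset fun t ht => ?_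
  simp only [Set.mem_ofPred_eq, Polynomial.IsRoot] at ht ⊢
  rw [hM, ht]

lemma es_polar' {n : ℕ} (A D : Matrix (Fin n) (Fin n) ℝ)
    (hc : ∀ x : Fin n → ℝ, ∑ i, ((A *ᵥ x) i) ^ 2 ≤ ∑ i, x i ^ 2)
    (h1 : A * D = D * A) (h2 : Aᵀ * D = D * Aᵀ) :
    ∃ R : Matrix (Fin n) (Fin n) ℝ, R * Rᵀ = 1 ∧ R * D = D * R ∧
      trace (Aᵀ * A) ≤ trace (Rᵀ * A) := by
  let G : Set (Matrix (Fin n) (Fin n) ℝ) := {R | R * Rᵀ = 1 ∧ R * D = D * R}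
  have hb : ∀ R : Matrix (Fin n) (Fin n) ℝ, R * Rᵀ = 1 → ∀ i j, R i j ∈ Set.Icc (-1 : ℝ) 1 := by
    intro R hR i j
    have := congrFun (congrFun hR i) i
    simp only [mul_apply, transpose_apply, one_apply_eq] at this
    have h3 : R i j * R i j ≤ 1 := by
      rw [← this]
      exact Finset.single_le_sum (f := fun j => R i j * R i j)
        (fun j _ => mul_self_nonneg _) (mem_univ j)
    constructor <;> nlinarith
  have hG : IsCompact G := by
    have hK : IsCompact (Set.pi Set.univ fun _ : Fin n => Set.pi Set.univ fun _ : Fin n =>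
        Set.Icc (-1 : ℝ) 1) :=
      isCompact_univ_pi fun _ => isCompact_univ_pi fun _ => isCompact_Icc
    refine IsCompact.of_isClosed_subset hK ?_ ?_
    · have c1 : IsClosed {R : Matrix (Fin n) (Fin n) ℝ | R * Rᵀ = 1} :=
        isClosed_eq (by fun_prop) (by fun_prop)
      have c2 : IsClosed {R : Matrix (Fin n) (Fin n) ℝ | R * D = D * R} :=
        isClosed_eq (by fun_prop) (by fun_prop)
      exact c1.inter c2
    · intro R hR i _ j _
      exact hb R hR.1 i j
  obtain ⟨R, hR, hmax⟩ := hG.exists_isMaxOn ⟨1, by simp [G]⟩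
    (f := fun R : Matrix (Fin n) (Fin n) ℝ => trace (Rᵀ * A)) (by fun_prop)
  refine ⟨R, hR.1, hR.2, ?_⟩
  let At : ℝ → Matrix (Fin n) (Fin n) ℝ := fun t => (1 - t) • A + t • 1
  have key : ∀ t ∈ Set.Ioo (0 : ℝ) 1, (At t).det ≠ 0 →
      trace ((At t)ᵀ * At t) ≤ (1 - t) * trace (Rᵀ * A) + t * n := by
    intro t ht hdet
    obtain ⟨X, hX1, hX2, hX3⟩ := es_polar (At t) D hdet (by
      intro x
      refine le_trans ?_ (le_of_eq (by ring :
        (1 - t) * ∑ i, x i ^ 2 + t * ∑ i, x i ^ 2 = ∑ i, x i ^ 2))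
      have h4 : ∑ i, ((At t *ᵥ x) i) ^ 2 ≤
          (1 - t) * ∑ i, ((A *ᵥ x) i) ^ 2 + t * ∑ i, x i ^ 2 := by
        rw [Finset.mul_sum, Finset.mul_sum, ← Finset.sum_add_distrib]
        refine Finset.sum_le_sum fun i _ => ?_
        simp only [At, add_mulVec, smul_mulVec, one_mulVec, Pi.add_apply, Pi.smul_apply, smul_eq_mul]
        nlinarith [mul_nonneg (mul_nonneg ht.1.le (sub_nonneg.2 ht.2.le))
          (sq_nonneg ((A *ᵥ x) i - x i))]
      have := mul_le_mul_of_nonneg_left (hc x) (sub_nonneg.2 ht.2.le)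
      linarith) (by simp [At, Matrix.add_mul, Matrix.mul_add, h1])
        (by simp [At, Matrix.add_mul, Matrix.mul_add, h2])
    refine hX3.trans ?_
    have h5 : trace (Xᵀ * A) ≤ trace (Rᵀ * A) := hmax ⟨hX1, hX2⟩
    have h6 : trace Xᵀ ≤ n := by
      rw [trace_transpose, trace]
      calc ∑ i, diag X i ≤ ∑ i : Fin n, (1 : ℝ) := Finset.sum_le_sum fun i _ => (hb X hX1 i i).2
        _ = n := by simp
    have h7 : trace (Xᵀ * At t) = (1 - t) * trace (Xᵀ * A) + t * trace Xᵀ := by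
      simp [At, Matrix.mul_add]
    rw [h7]
    have := mul_le_mul_of_nonneg_left h5 (sub_nonneg.2 ht.2.le)
    have := mul_le_mul_of_nonneg_left h6 ht.1.le
    linarith
  have hAt : Continuous At := by fun_prop
  have l1 : Filter.Tendsto (fun t => trace ((At t)ᵀ * At t)) (nhdsWithin 0 (Set.Ioi 0))
      (nhds (trace ((At 0)ᵀ * At 0))) :=
    ((by fun_prop : Continuous fun t => trace ((At t)ᵀ * At t)).tendsto 0).mono_left
      nhdsWithin_le_nhds
  have l2 : Filter.Tendsto (fun t : ℝ => (1 - t) * trace (Rᵀ * A) + t * n)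
      (nhdsWithin 0 (Set.Ioi 0)) (nhds ((1 - 0) * trace (Rᵀ * A) + 0 * n)) :=
    ((by fun_prop : Continuous fun t : ℝ => (1 - t) * trace (Rᵀ * A) + t * n).tendsto 0).mono_left
      nhdsWithin_le_nhds
  have ev : ∀ᶠ t in nhdsWithin (0 : ℝ) (Set.Ioi 0), (At t).det ≠ 0 := by
    have hfin := es_det A
    have h8 : ∀ᶠ t in nhdsWithin (0 : ℝ) {0}ᶜ,
        t ∉ {t : ℝ | ((1 - t) • A + t • (1 : Matrix (Fin n) (Fin n) ℝ)).det = 0} := by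
      have hc : IsClosed ({t : ℝ | ((1 - t) • A + t • (1 : Matrix (Fin n) (Fin n) ℝ)).det = 0} \ {0}) :=
        (hfin.subset Set.sdiff_subset).isClosed
      have h9 := hc.isOpen_compl.mem_nhds (x := (0 : ℝ)) (by simp)
      filter_upwards [mem_nhdsWithin_of_mem_nhds h9, self_mem_nhdsWithin] with t a b c
      exact a ⟨c, b⟩
    exact h8.filter_mono (nhdsWithin_mono _ fun t ht => ne_of_gt ht)
  have := le_of_tendsto_of_tendsto l1 l2 (by
    filter_upwards [ev, Ioo_mem_nhdsGT (zero_lt_one' ℝ)] with t a b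
    exact key t b a)
  simpa [At] using this


lemma es_hw {n : ℕ} (d δ : Fin n → ℝ) (hd : Monotone d) (hδ : Monotone δ)
    (W : Matrix (Fin n) (Fin n) ℝ) (hr : ∀ i, ∑ j, W i j ^ 2 = 1) (hc : ∀ j, ∑ i, W i j ^ 2 = 1) :
    ∑ i, (d i - δ i) ^ 2 ≤ ∑ i, ∑ j, (d i - δ j) ^ 2 * W i j ^ 2 := by
  let M : Matrix (Fin n) (Fin n) ℝ := fun i j => W i j ^ 2
  have hM : M ∈ doublyStochastic ℝ (Fin n) :=
    mem_doublyStochastic_iff_sum.2 ⟨fun i j => sq_nonneg _, hr, hc⟩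
  obtain ⟨w, hw0, hw1, hw⟩ := exists_eq_sum_perm_of_mem_doublyStochastic hM
  have e1 : ∀ i j, W i j ^ 2 = ∑ σ : Equiv.Perm (Fin n), w σ * (if σ i = j then 1 else 0) := by
    intro i j
    have := congrFun (congrFun hw i) j
    simp only [Matrix.sum_apply, Matrix.smul_apply, smul_eq_mul, M] at this
    rw [← this]
    refine Finset.sum_congr rfl fun σ _ => ?_
    simp [Equiv.Perm.permMatrix, PEquiv.toMatrix_apply, eq_comm]
  have e2 : ∑ i, ∑ j, (d i - δ j) ^ 2 * W i j ^ 2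
      = ∑ σ : Equiv.Perm (Fin n), w σ * ∑ i, (d i - δ (σ i)) ^ 2 := by
    simp only [e1, Finset.mul_sum]
    have : ∀ i, ∑ j, ∑ σ : Equiv.Perm (Fin n), (d i - δ j) ^ 2 * (w σ * if σ i = j then 1 else 0)
       = ∑ σ : Equiv.Perm (Fin n), w σ * (d i - δ (σ i)) ^ 2 := by
      intro i
      rw [Finset.sum_comm]
      refine Finset.sum_congr rfl fun σ _ => ?_
      simp [mul_comm]
    simp only [this]
    rw [Finset.sum_comm]
  rw [e2]
  have e3 : ∀ σ : Equiv.Perm (Fin n), ∑ i, (d i - δ i) ^ 2 ≤ ∑ i, (d i - δ (σ i)) ^ 2 := by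
    intro σ
    have a := (hd.monovary hδ).sum_mul_comp_perm_le_sum_mul (σ := σ)
    have b : ∑ i, δ (σ i) ^ 2 = ∑ i, δ i ^ 2 := Equiv.sum_comp σ (fun i => δ i ^ 2)
    simp only [sub_sq, Finset.sum_add_distrib, Finset.sum_sub_distrib, mul_assoc,
      ← Finset.mul_sum]
    linarith
  calc ∑ i, (d i - δ i) ^ 2 = ∑ σ : Equiv.Perm (Fin n), w σ * ∑ i, (d i - δ i) ^ 2 := by
        rw [← Finset.sum_mul, hw1, one_mul]
    _ ≤ _ := Finset.sum_le_sum fun σ _ => mul_le_mul_of_nonneg_left (e3 σ) (hw0 σ)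

lemma es_block {n : ℕ} (d : Fin n → ℝ) (W : Matrix (Fin n) (Fin n) ℝ)
    (hW : Wᵀ * W = 1) (x : Fin n → ℝ) :
    ∑ i, (((Matrix.of fun i j => if d i = d j then W i j else 0) *ᵥ x) i) ^ 2 ≤ ∑ i, x i ^ 2 := by
  have iso : ∀ y : Fin n → ℝ, ∑ i, ((W *ᵥ y) i) ^ 2 = ∑ i, y i ^ 2 := by
    intro y
    have : (W *ᵥ y) ⬝ᵥ (W *ᵥ y) = y ⬝ᵥ y := by
      rw [dotProduct_mulVec, ← mulVec_transpose, mulVec_mulVec, hW, one_mulVec]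
    simpa [dotProduct, sq] using this
  let T := Finset.univ.image d
  have hsum : ∀ f : Fin n → ℝ, ∑ i, f i = ∑ c ∈ T, ∑ i, if d i = c then f i else 0 := by
    intro f
    rw [Finset.sum_comm]
    refine Finset.sum_congr rfl fun i _ => ?_
    rw [Finset.sum_ite_eq, if_pos (Finset.mem_image_of_mem d (mem_univ i))]
  rw [hsum, hsum fun i => x i ^ 2]
  refine Finset.sum_le_sum fun c _ => ?_
  calc _ ≤ ∑ i, ((W *ᵥ fun j => if d j = c then x j else 0) i) ^ 2 := by
        refine Finset.sum_le_sum fun i _ => ?_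
        split_ifs with h
        · apply le_of_eq
          congr 1
          simp only [mulVec, dotProduct, of_apply]
          refine Finset.sum_congr rfl fun j _ => ?_
          simp only [h, eq_comm (a := c)]
          split_ifs <;> simp
        · positivity
    _ = _ := by
        rw [iso]
        refine Finset.sum_congr rfl fun i _ => ?_
        split_ifs <;> simp

lemma es_tr {n : ℕ} (X : Matrix (Fin n) (Fin n) ℝ) :
    ∑ i, ∑ j, (X i j) ^ 2 = trace (Xᵀ * X) := by
  simp only [trace, Matrix.diag, mul_apply, transpose_apply, sq]
  rw [Finset.sum_comm]

lemma es_frob {n : ℕ} (X : Matrix (Fin n) (Fin n) ℝ) :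
    frobNorm X ^ 2 = ∑ i, ∑ j, (X i j) ^ 2 := by
  unfold frobNorm
  rw [Real.sq_sqrt (by positivity)]

lemma es_inv {n : ℕ} (X U V : Matrix (Fin n) (Fin n) ℝ) (hU : U * Uᵀ = 1) (hV : V * Vᵀ = 1) :
    ∑ i, ∑ j, ((Uᵀ * X * V) i j) ^ 2 = ∑ i, ∑ j, (X i j) ^ 2 := by
  rw [es_tr, es_tr]
  have : (Uᵀ * X * V)ᵀ * (Uᵀ * X * V) = Vᵀ * (Xᵀ * (U * Uᵀ) * X * V) := by
    simp only [transpose_mul, transpose_transpose, Matrix.mul_assoc]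
  rw [this, trace_mul_comm, hU]
  simp only [Matrix.mul_assoc, hV, Matrix.mul_one, Matrix.one_mul]

/-- continuity of eigenvectors. Let `Σ, Λ` be positive semidefinite with
increasingly ordered eigenvalue matrices `D, Δ`, `Σ` having at least two distinct eigenvalues,
and `m = min{(λ−μ)² : λ ≠ μ eigenvalues of Σ}`. Then for every orthogonal `Q` with
`Λ = Q Δ Qᵀ`, there exists an orthogonal `P` with `Σ = P D Pᵀ` and
`‖P − Q‖_F² ≤ 4 √(n/m) ‖Σ − Λ‖_F`. -/
theorem eigenvector_stability (n : ℕ) (d δ : Fin n → ℝ)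
    (hd0 : ∀ i, 0 ≤ d i) (hδ0 : ∀ i, 0 ≤ δ i)
    (hd : Monotone d) (hδ : Monotone δ)
    (Sig Lam P₀ Q : Matrix (Fin n) (Fin n) ℝ)
    (hP₀ : P₀ * P₀ᵀ = 1) (hSig : Sig = P₀ * Matrix.diagonal d * P₀ᵀ)
    (hQ : Q * Qᵀ = 1) (hLam : Lam = Q * Matrix.diagonal δ * Qᵀ)
    (hdistinct : ∃ i j, d i ≠ d j)
    (m : ℝ) (hm : IsLeast {x : ℝ | ∃ i j : Fin n, d i ≠ d j ∧ x = (d i - d j) ^ 2} m) :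
    ∃ P : Matrix (Fin n) (Fin n) ℝ, P * Pᵀ = 1 ∧ Sig = P * Matrix.diagonal d * Pᵀ ∧
      frobNorm (P - Q) ^ 2 ≤ 4 * Real.sqrt ((n : ℝ) / m) * frobNorm (Sig - Lam) := by
  have hP₀' : P₀ᵀ * P₀ = 1 := mul_eq_one_comm.1 hP₀
  have hQ' : Qᵀ * Q = 1 := mul_eq_one_comm.1 hQ
  obtain ⟨W, hWdef⟩ : ∃ W, W = P₀ᵀ * Q := ⟨_, rfl⟩
  have hW : Wᵀ * W = 1 := by
    calc Wᵀ * W = Qᵀ * (P₀ * P₀ᵀ) * Q := by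
          rw [hWdef]; simp only [transpose_mul, transpose_transpose, Matrix.mul_assoc]
      _ = 1 := by rw [hP₀, Matrix.mul_one, hQ']
  have hW' : W * Wᵀ = 1 := mul_eq_one_comm.1 hW
  have hr : ∀ i, ∑ j, W i j ^ 2 = 1 := fun i => by
    have := congrFun (congrFun hW' i) i
    simpa [mul_apply, sq] using this
  have hc : ∀ j, ∑ i, W i j ^ 2 = 1 := fun i => by
    have := congrFun (congrFun hW i) i
    simpa [mul_apply, sq] using this
  -- the difference of the two matrices
  have hE : frobNorm (Sig - Lam) ^ 2 = ∑ i, ∑ j, (d i - δ j) ^ 2 * W i j ^ 2 := by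
    rw [es_frob, ← es_inv (Sig - Lam) P₀ Q hP₀ hQ]
    have : P₀ᵀ * (Sig - Lam) * Q = diagonal d * W - W * diagonal δ := by
      rw [Matrix.mul_sub, Matrix.sub_mul, hSig, hLam, hWdef]
      congr 1
      · calc P₀ᵀ * (P₀ * diagonal d * P₀ᵀ) * Q = (P₀ᵀ * P₀) * diagonal d * (P₀ᵀ * Q) := by
              simp only [Matrix.mul_assoc]
          _ = _ := by rw [hP₀', Matrix.one_mul]
      · calc P₀ᵀ * (Q * diagonal δ * Qᵀ) * Q = P₀ᵀ * Q * diagonal δ * (Qᵀ * Q) := by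
              simp only [Matrix.mul_assoc]
          _ = _ := by rw [hQ', Matrix.mul_one]
    rw [this]
    refine Finset.sum_congr rfl fun i _ => Finset.sum_congr rfl fun j _ => ?_
    rw [Matrix.sub_apply, diagonal_mul, mul_diagonal]; ring
  have hHW := es_hw d δ hd hδ W hr hc
  rw [← hE] at hHW
  have hm0 : 0 < m := by
    obtain ⟨i, j, hij, rfl⟩ := hm.1
    have : d i - d j ≠ 0 := sub_ne_zero.2 hij
    positivity
  -- off-block mass
  obtain ⟨S, hS⟩ : ∃ S, S = ∑ i, ∑ j, (if d i = d j then 0 else W i j ^ 2) := ⟨_, rfl⟩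
  have hS0 : 0 ≤ S := by
    rw [hS]
    exact Finset.sum_nonneg fun i _ => Finset.sum_nonneg fun j _ => by split_ifs <;> positivity
  have hSn : S ≤ n := by
    calc S ≤ ∑ i, ∑ j, W i j ^ 2 := by
          rw [hS]
          exact Finset.sum_le_sum fun i _ => Finset.sum_le_sum fun j _ => by
            split_ifs <;> first | positivity | exact le_rfl
      _ = n := by simp [hr]
  have hSm : m * S ≤ 4 * frobNorm (Sig - Lam) ^ 2 := by
    have a1 : m * S ≤ ∑ i, ∑ j, (d i - d j) ^ 2 * W i j ^ 2 := by
      rw [hS, Finset.mul_sum]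
      refine Finset.sum_le_sum fun i _ => ?_
      rw [Finset.mul_sum]
      refine Finset.sum_le_sum fun j _ => ?_
      split_ifs with h
      · rw [mul_zero]; positivity
      · exact mul_le_mul_of_nonneg_right (hm.2 ⟨i, j, h, rfl⟩) (sq_nonneg _)
    have a2 : ∑ i, ∑ j, (d i - d j) ^ 2 * W i j ^ 2 ≤
        ∑ i, ∑ j, (2 * ((d i - δ j) ^ 2 * W i j ^ 2) + 2 * ((d j - δ j) ^ 2 * W i j ^ 2)) := by
      refine Finset.sum_le_sum fun i _ => Finset.sum_le_sum fun j _ => ?_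
      have := mul_nonneg (sq_nonneg ((d i - δ j) + (d j - δ j))) (sq_nonneg (W i j))
      nlinarith
    have a3 : ∑ i, ∑ j, (d j - δ j) ^ 2 * W i j ^ 2 = ∑ i, (d i - δ i) ^ 2 := by
      rw [Finset.sum_comm]
      refine Finset.sum_congr rfl fun j _ => ?_
      rw [← Finset.mul_sum, hc, mul_one]
    simp only [Finset.sum_add_distrib, ← Finset.mul_sum] at a2
    rw [a3, ← hE] at a2
    linarith
  -- the block diagonal part of `W` and its polar factor
  obtain ⟨A, hA⟩ : ∃ A : Matrix (Fin n) (Fin n) ℝ,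
    A = Matrix.of fun i j => if d i = d j then W i j else 0 := ⟨_, rfl⟩
  have hAij : ∀ i j, A i j = if d i = d j then W i j else 0 := fun i j => by rw [hA]; rfl
  obtain ⟨R, hR, hRD, hRt⟩ := es_polar' A (diagonal d) (by
      intro x; rw [hA]; exact es_block d W hW x)
    (by
      ext i j
      rw [mul_diagonal, diagonal_mul, hAij]
      split_ifs with h
      · rw [h]; ring
      · simp)
    (by
      ext i j
      rw [mul_diagonal, diagonal_mul, transpose_apply, hAij]
      split_ifs with h
      · rw [h]; ring
      · simp)
  have hR0 : ∀ i j, d i ≠ d j → R i j = 0 := fun i j h => by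
    have := congrFun (congrFun hRD i) j
    rw [mul_diagonal, diagonal_mul] at this
    have h0 : R i j * (d i - d j) = 0 := by linarith
    exact (mul_eq_zero.1 h0).resolve_right (sub_ne_zero.2 h)
  have hR' : Rᵀ * R = 1 := mul_eq_one_comm.1 hR
  have hRW : trace (Rᵀ * W) = trace (Rᵀ * A) := by
    simp only [trace, Matrix.diag, mul_apply, transpose_apply]
    refine Finset.sum_congr rfl fun j _ => Finset.sum_congr rfl fun i _ => ?_
    rw [hAij]
    split_ifs with h
    · rfl
    · rw [hR0 i j h]; simp
  have hAS : trace (Aᵀ * A) = n - S := by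
    rw [← es_tr, hS, eq_sub_iff_add_eq, ← Finset.sum_add_distrib]
    calc _ = ∑ i, ∑ j, W i j ^ 2 := by
          refine Finset.sum_congr rfl fun i _ => ?_
          rw [← Finset.sum_add_distrib]
          refine Finset.sum_congr rfl fun j _ => ?_
          rw [hAij]; split_ifs <;> simp
      _ = n := by simp [hr]
  have hfin : frobNorm (P₀ * R - Q) ^ 2 ≤ 2 * S := by
    have e : P₀ᵀ * (P₀ * R - Q) * (1 : Matrix (Fin n) (Fin n) ℝ) = R - W := by
      rw [Matrix.mul_one, Matrix.mul_sub, ← Matrix.mul_assoc, hP₀', Matrix.one_mul, hWdef]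
    rw [es_frob, ← es_inv (P₀ * R - Q) P₀ 1 hP₀ (by simp), e, es_tr]
    have e2 : trace ((R - W)ᵀ * (R - W)) = 2 * n - 2 * trace (Rᵀ * W) := by
      have e3 : trace (Wᵀ * R) = trace (Rᵀ * W) := by
        rw [← trace_transpose, transpose_mul, transpose_transpose]
      rw [transpose_sub, Matrix.sub_mul, Matrix.mul_sub, Matrix.mul_sub, hR', hW]
      simp only [trace_sub, trace_one, Fintype.card_fin, e3]
      ring
    rw [e2, hRW]
    linarith
  refine ⟨P₀ * R, ?_, ?_, hfin.trans ?_⟩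
  · calc P₀ * R * (P₀ * R)ᵀ = P₀ * (R * Rᵀ) * P₀ᵀ := by
          simp only [transpose_mul, Matrix.mul_assoc]
      _ = 1 := by rw [hR, Matrix.mul_one, hP₀]
  · calc Sig = P₀ * diagonal d * (R * Rᵀ) * P₀ᵀ := by rw [hR, Matrix.mul_one, hSig]
      _ = P₀ * (diagonal d * R) * Rᵀ * P₀ᵀ := by simp only [Matrix.mul_assoc]
      _ = _ := by rw [← hRD]; simp only [transpose_mul, Matrix.mul_assoc]
  · have hf0 : 0 ≤ frobNorm (Sig - Lam) := Real.sqrt_nonneg _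
    have : S ≤ 2 * Real.sqrt ((n : ℝ) / m) * frobNorm (Sig - Lam) := by
      refine abs_le_of_sq_le_sq' ?_ (by positivity) |>.2
      rw [mul_pow, mul_pow, Real.sq_sqrt (by positivity)]
      have h1 : S ^ 2 ≤ n * S := by nlinarith
      have h2 : S ≤ 4 * frobNorm (Sig - Lam) ^ 2 / m := by
        rw [le_div_iff₀ hm0]; linarith
      calc S ^ 2 ≤ n * S := h1
        _ ≤ n * (4 * frobNorm (Sig - Lam) ^ 2 / m) := by gcongr
        _ = _ := by ring
    linarith
end

section
/- Let S be an n×n doubly stochastic matrix (S_{ij} ≥ 0, each row sums to 1, each column sums to 1) and let d₁ ≤ d₂ ≤ … ≤ d_n and δ₁ ≤ δ₂ ≤ … ≤ δ_n be real numbers sorted increasingly. Then Σ_{i,j} d_i S_{ij} δ_j ≤ Σ_i d_i δ_i; i.e. among doubly stochastic matrices S, the linear functional S ↦ Σ_{i,j} d_i S_{ij} δ_j is maximized at S = Iₙ. -/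
open Matrix Finset

/-- among doubly stochastic matrices `S`, the functional
`S ↦ Σ_{i,j} d_i S_{ij} δ_j` with `d, δ` sorted increasingly is maximized at the identity:
`Σ_{i,j} d_i S_{ij} δ_j ≤ Σ_i d_i δ_i`. -/
theorem doubly_stochastic_rearrangement (n : ℕ) (S : Matrix (Fin n) (Fin n) ℝ)
    (hS : ∀ i j, 0 ≤ S i j) (hrow : ∀ i, ∑ j, S i j = 1) (hcol : ∀ j, ∑ i, S i j = 1)
    (d δ : Fin n → ℝ) (hd : Monotone d) (hδ : Monotone δ) :
    ∑ i, ∑ j, d i * S i j * δ j ≤ ∑ i, d i * δ i := by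
  obtain ⟨w, hw0, hw1, hwS⟩ := exists_eq_sum_perm_of_mem_doublyStochastic
    (mem_doublyStochastic_iff_sum.2 ⟨hS, hrow, hcol⟩)
  have hent : ∀ i j, S i j = ∑ σ : Equiv.Perm (Fin n), w σ * (if σ i = j then 1 else 0) := by
    intro i j
    rw [← hwS, Matrix.sum_apply]
    refine Finset.sum_congr rfl fun σ _ => ?_
    simp [Equiv.toPEquiv_apply, Equiv.Perm.permMatrix, PEquiv.toMatrix_apply, eq_comm]
  have key : ∑ i, ∑ j, d i * S i j * δ j
      = ∑ σ : Equiv.Perm (Fin n), w σ * ∑ i, d i * δ (σ i) := by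
    have h1 : ∀ i, ∑ j, d i * S i j * δ j
        = ∑ σ : Equiv.Perm (Fin n), w σ * (d i * δ (σ i)) := by
      intro i
      simp_rw [hent, Finset.mul_sum, Finset.sum_mul]
      rw [Finset.sum_comm]
      refine Finset.sum_congr rfl fun σ _ => ?_
      rw [Finset.sum_eq_single (σ i)]
      · simp only [if_true]; ring
      · intro j _ hj
        simp [hj.symm]
      · simp
    simp_rw [h1, Finset.mul_sum]
    rw [Finset.sum_comm]
  rw [key]
  calc _ ≤ ∑ σ : Equiv.Perm (Fin n), w σ * ∑ i, d i * δ i :=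
        Finset.sum_le_sum fun σ _ => mul_le_mul_of_nonneg_left
          (hd.monovary hδ).sum_mul_comp_perm_le_sum_mul (hw0 σ)
    _ = _ := by rw [← Finset.sum_mul, hw1, one_mul]
end
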